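/- arXiv:1108.4031 — 2 statements merged into one kernel-verified Lean document; each statement's English description precedes it below -/
import Mathlib

section
/- Let $p\equiv 1\pmod 4$ be prime, $n=(p-1)/2$, $\zeta=e^{2\pi i/p}$, $\varepsilon>1$ the fundamental unit of $\mathbb{Q}(\sqrt p)$ and $h$ the class number. Then $\prod_{j=1}^{n}\big(1+(\tfrac{j}{p})\zeta^{j}\big)^2 = \zeta^{n(n+1)/2}\,\varepsilon^{(2-(2/p))h}\,\prod_{j=1}^{n}(\zeta^{j/2}-\zeta^{-j/2})$. -/
section helpers
set_option linter.unusedSectionVars false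
set_option linter.unusedVariables false
open Finset

noncomputable def zt (p : ℕ) : ℂ := Complex.exp (2 * Real.pi * Complex.I / p)

lemma zt_prim (p : ℕ) (hp : p ≠ 0) : IsPrimitiveRoot (zt p) p := Complex.isPrimitiveRoot_exp p hp

lemma prod_range_two_mul' {M : Type*} [CommMonoid M] (F : ℕ → M) (n : ℕ) :
    ∏ j ∈ range (2 * n), F j = ∏ k ∈ range n, (F (2 * k) * F (2 * k + 1)) := by
  induction n with
  | zero => simp
  | succ n ih => rw [show 2 * (n + 1) = 2 * n + 1 + 1 by ring, prod_range_succ, prod_range_succ,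
      prod_range_succ, ih, mul_assoc]

noncomputable def Dp (p : ℕ) : ℂ := ∏ k ∈ range ((p - 1) / 2), (zt p ^ (2 * k + 1) - zt p ^ (p - (2 * k + 1)))

lemma Dp_sq (p : ℕ) [hpp : Fact (Nat.Prime p)] (hp : p % 4 = 1) : Dp p ^ 2 = p := by
  have hprim := zt_prim p hpp.out.ne_zero
  have h2 : IsPrimitiveRoot (zt p ^ 2) p := hprim.pow_of_coprime 2 (by
    rw [Nat.coprime_two_left, Nat.odd_iff]; omega)
  obtain ⟨m, hm⟩ : ∃ m, p = 4 * m + 1 := ⟨p / 4, by omega⟩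
  have hn : (p - 1) / 2 = 2 * m := by omega
  have h3 := IsPrimitiveRoot.prod_one_sub_pow_eq_order (n := 2 * (2 * m)) (μ := zt p ^ 2)
    (by rw [show 2 * (2 * m) + 1 = p by omega]; exact h2)
  rw [prod_range_two_mul' (fun k => 1 - (zt p ^ 2) ^ (k + 1)), prod_mul_distrib] at h3
  rw [← prod_range_reflect (fun k => 1 - (zt p ^ 2) ^ (2 * k + 1 + 1)), ← prod_mul_distrib] at h3
  have h4 : ∀ k ∈ range (2 * m), (1 - (zt p ^ 2) ^ (2 * k + 1)) * (1 - (zt p ^ 2) ^ (2 * (2 * m - 1 - k) + 1 + 1))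
      = (-1) * (zt p ^ (2 * k + 1) - zt p ^ (p - (2 * k + 1))) ^ 2 := by
    intro k hk
    rw [mem_range] at hk
    have e1 : 2 * (2 * m - 1 - k) + 1 + 1 = p - (2 * k + 1) := by omega
    rw [e1, pow_right_comm (zt p) 2 (2 * k + 1), pow_right_comm (zt p) 2 (p - (2 * k + 1))]
    have e2 : zt p ^ (2 * k + 1) * zt p ^ (p - (2 * k + 1)) = 1 := by
      rw [← pow_add, show 2 * k + 1 + (p - (2 * k + 1)) = p by omega, hprim.pow_eq_one]
    generalize zt p ^ (2 * k + 1) = u at *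
    generalize zt p ^ (p - (2 * k + 1)) = v at *
    linear_combination (u * v - 1) * e2
  rw [prod_congr rfl h4, prod_mul_distrib, prod_const, card_range, pow_mul, neg_one_sq, one_pow, one_mul,
    prod_pow] at h3
  rw [Dp, hn, h3, hm]; push_cast; ring

lemma Dp_pos (p : ℕ) [hpp : Fact (Nat.Prime p)] (hp : p % 4 = 1) : Dp p = (Real.sqrt p : ℂ) := by
  have hprim := zt_prim p hpp.out.ne_zero
  have hp0 : (p : ℝ) > 0 := by exact_mod_cast hpp.out.pos
  suffices h : ∃ r : ℝ, 0 < r ∧ Dp p = r by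
    obtain ⟨r, hr, h⟩ := h
    have := Dp_sq p hp
    rw [h] at this ⊢
    have h1 : r ^ 2 = p := by exact_mod_cast this
    rw [← h1, Real.sqrt_sq hr.le]
  obtain ⟨m, hm⟩ : ∃ m, p = 4 * m + 1 := ⟨p / 4, by omega⟩
  have hn : (p - 1) / 2 = m + m := by omega
  have key : ∀ a : ℕ, a ≤ p → zt p ^ a - zt p ^ (p - a) = 2 * Complex.I * (Real.sin (2 * Real.pi * a / p) : ℂ) := by
    intro a ha
    have e2 : zt p ^ (p - a) = Complex.exp (-(2 * Real.pi * a / p : ℝ) * Complex.I) := by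
      have h1 : zt p ^ (p - a) * zt p ^ a = 1 := by
        rw [← pow_add, Nat.sub_add_cancel ha, hprim.pow_eq_one]
      rw [eq_div_of_mul_eq (pow_ne_zero _ (Complex.exp_ne_zero _)) h1, ← Complex.exp_nat_mul,
        one_div, ← Complex.exp_neg]
      congr 1; push_cast; ring
    have e1 : zt p ^ a = Complex.exp ((2 * Real.pi * a / p : ℝ) * Complex.I) := by
      rw [zt, ← Complex.exp_nat_mul]
      congr 1; push_cast; ring
    rw [e1, e2, Complex.exp_mul_I, Complex.exp_mul_I, Complex.cos_neg, Complex.sin_neg, Complex.ofReal_sin]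
    ring
  refine ⟨∏ k ∈ range m, 4 * Real.sin (2 * Real.pi * ((2 * k + 1 : ℕ) : ℝ) / p) * Real.sin (2 * Real.pi * ((2 * k + 2 : ℕ) : ℝ) / p), ?_, ?_⟩
  · have hs : ∀ a : ℕ, 0 < a → 2 * a < p → 0 < Real.sin (2 * Real.pi * (a : ℝ) / p) := by
      intro a ha hap
      have h1 : (2 * a : ℝ) < p := by exact_mod_cast hap
      have h2 : (0 : ℝ) < a := by exact_mod_cast ha
      apply Real.sin_pos_of_pos_of_lt_pi
      · positivity
      · rw [div_lt_iff₀ hp0]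
        nlinarith [Real.pi_pos]
    apply prod_pos
    intro k hk
    rw [mem_range] at hk
    have := hs (2 * k + 1) (by omega) (by omega)
    have := hs (2 * k + 2) (by omega) (by omega)
    positivity
  · rw [Dp, hn, prod_range_add, ← prod_range_reflect (fun k => zt p ^ (2 * (m + k) + 1) - zt p ^ (p - (2 * (m + k) + 1))),
      ← prod_mul_distrib]
    push_cast
    apply prod_congr rfl
    intro k hk
    rw [mem_range] at hk
    have e1 : 2 * (m + (m - 1 - k)) + 1 = p - (2 * k + 2) := by omega
    have e2 : p - (p - (2 * k + 2)) = 2 * k + 2 := by omega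
    have k1 := key (2 * k + 1) (by omega)
    have k2 := key (2 * k + 2) (by omega)
    rw [e1, e2, ← neg_sub (zt p ^ (2 * k + 2)), k1, k2]
    push_cast
    linear_combination (-4 * Complex.sin (2 * ↑Real.pi * (2 * ↑k + 1) / ↑p) * Complex.sin (2 * ↑Real.pi * (2 * ↑k + 2) / ↑p)) * Complex.I_sq

open Polynomial in
lemma gauss_sign_one (p : ℕ) [hpp : Fact (Nat.Prime p)] (hp : p % 4 = 1) (c : ℤ) (hc : c = 1 ∨ c = -1)
    (h : ∑ j ∈ range p, (legendreSym p j : ℂ) * zt p ^ j = c * Dp p) : c = 1 := by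
  have hprim := zt_prim p hpp.out.ne_zero
  obtain ⟨m, hm⟩ : ∃ m, p = 2 * m + 1 := ⟨p / 2, by omega⟩
  have hm0 : 0 < m := by have := hpp.out.two_le; omega
  have hn : (p - 1) / 2 = m := by omega
  have hn' : p / 2 = m := by omega
  let F : ℤ[X] := ∑ j ∈ range p, C (legendreSym p j) * X ^ j -
    C c * ∏ k ∈ range m, (X ^ (2 * k + 1) - X ^ (p - (2 * k + 1)))
  have hF : aeval (zt p) F = 0 := by
    simp only [F, map_sub, map_sum, map_mul, map_prod, aeval_X, map_pow, aeval_C]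
    rw [sub_eq_zero]
    simpa [Dp, hn] using h
  have hd : cyclotomic p ℤ ∣ F := by
    rw [cyclotomic_eq_minpoly hprim hpp.out.pos]
    exact minpoly.isIntegrallyClosed_dvd (hprim.isIntegral hpp.out.pos) hF
  have hd2 := Polynomial.map_dvd (Int.castRingHom (ZMod p)) hd
  rw [map_cyclotomic] at hd2
  have hcyc : cyclotomic p (ZMod p) = (X - 1) ^ (p - 1) := by
    have := cyclotomic_prime_mul_X_sub_one (ZMod p) p
    have h1 : (X - 1 : (ZMod p)[X]) ≠ 0 := X_sub_C_ne_zero 1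
    apply mul_right_cancel₀ h1
    rw [this, ← pow_succ, Nat.sub_add_cancel hpp.out.one_lt.le, sub_pow_char]
    simp
  rw [hcyc] at hd2
  have hd3 : (X - 1 : (ZMod p)[X]) ^ (m + 1) ∣ F.map (Int.castRingHom (ZMod p)) :=
    (pow_dvd_pow _ (by omega)).trans hd2
  have hFm : F.map (Int.castRingHom (ZMod p)) = ∑ j ∈ range p, C ((j : ZMod p) ^ m) * X ^ j -
    C (c : ZMod p) * ∏ k ∈ range m, (X ^ (2 * k + 1) - X ^ (p - (2 * k + 1))) := by
    simp only [F, Polynomial.map_sub, Polynomial.map_sum, Polynomial.map_mul, Polynomial.map_prod,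
      Polynomial.map_pow, map_X, map_C, Int.coe_castRingHom, legendreSym.eq_pow, hn', Int.cast_natCast]
  rw [hFm] at hd3
  obtain ⟨Q, hQ⟩ := hd3
  have hB : ∏ k ∈ range m, (X ^ (2 * k + 1) - X ^ (p - (2 * k + 1)) : (ZMod p)[X]) =
      (X - 1) ^ m * ∏ k ∈ range m, (∑ i ∈ range (2 * k + 1), X ^ i - ∑ i ∈ range (p - (2 * k + 1)), X ^ i) := by
    rw [← card_range m, ← prod_const, card_range, ← prod_mul_distrib]
    apply prod_congr rfl
    intro k _
    have := mul_geom_sum (X : (ZMod p)[X]) (2 * k + 1)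
    have := mul_geom_sum (X : (ZMod p)[X]) (p - (2 * k + 1))
    rw [mul_sub]
    simp_all
  have gen : ∀ G : (ZMod p)[X], (derivative^[m] ((X - 1) ^ m * G)).eval 1 = m.factorial * G.eval 1 := by
    intro G
    rw [iterate_derivative_mul, eval_finsetSum, sum_range_succ', sum_eq_zero]
    · have : (X - 1 : (ZMod p)[X]) = X - C 1 := by simp
      simp [this, iterate_derivative_X_sub_pow_self]
    · intro k hk
      have : (X - 1 : (ZMod p)[X]) = X - C 1 := by simp
      rw [mem_range] at hk
      rw [this, iterate_derivative_X_sub_pow]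
      simp only [eval_smul, eval_mul, eval_pow, eval_sub, eval_X, eval_C, sub_self]
      rw [zero_pow (by omega)]; simp
  have h5 := congrArg (fun P => (derivative^[m] P).eval 1) hQ
  beta_reduce at h5
  rw [pow_succ, mul_assoc, gen, hB, iterate_derivative_sub, iterate_derivative_C_mul, eval_sub, eval_C_mul, gen,
    iterate_derivative_sum, eval_finsetSum] at h5
  simp only [iterate_derivative_C_mul, iterate_derivative_X_pow_eq_smul, eval_mul, eval_C, eval_smul, eval_pow,
    eval_X, one_pow, eval_sub, eval_one, sub_self, zero_mul, mul_zero, eval_prod, eval_finsetSum, sum_const,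
    card_range] at h5
  have h6 : ∑ j ∈ range p, (j : ZMod p) ^ m * ((j.descFactorial m : ℕ) : ZMod p) = -1 := by
    have h7 : ∀ j : ℕ, ((j.descFactorial m : ℕ) : ZMod p) = (descPochhammer (ZMod p) m).eval (j : ZMod p) := by
      intro j; rw [descPochhammer_eval_eq_descFactorial]
    simp only [h7]
    have h8 : ∑ j ∈ range p, (j : ZMod p) ^ m * (descPochhammer (ZMod p) m).eval (j : ZMod p)
        = ∑ x : ZMod p, x ^ m * (descPochhammer (ZMod p) m).eval x := by
      symm
      apply sum_bij' (fun (x : ZMod p) _ => x.val) (fun (j : ℕ) _ => (j : ZMod p))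
      · intro x _; rw [mem_range]; exact ZMod.val_lt x
      · simp
      · simp
      · intro j hj; exact ZMod.val_cast_of_lt (mem_range.1 hj)
      · simp
    rw [h8]
    have h9 : ∀ x : ZMod p, x ^ m * (descPochhammer (ZMod p) m).eval x =
        ∑ i ∈ range (m + 1), (descPochhammer (ZMod p) m).coeff i * x ^ (m + i) := by
      intro x
      rw [eval_eq_sum_range' (n := m + 1) (by rw [descPochhammer_natDegree]; omega), mul_sum]
      apply sum_congr rfl; intros; ring
    simp only [h9]
    rw [sum_comm]
    simp only [← mul_sum]
    rw [sum_range_succ, sum_eq_zero]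
    · have h10 : (descPochhammer (ZMod p) m).coeff m = 1 := by
        have := monic_descPochhammer (ZMod p) m
        rw [Monic, leadingCoeff, descPochhammer_natDegree] at this
        exact this
      rw [h10, zero_add, one_mul]
      have := FiniteField.sum_pow_units (ZMod p) (m + m)
      rw [ZMod.card, if_pos ⟨1, by omega⟩] at this
      rw [← this]
      rw [← Finset.sum_subset (Finset.subset_univ (univ.erase (0 : ZMod p)))]
      · symm
        apply sum_bij' (fun (u : (ZMod p)ˣ) _ => (u : ZMod p)) (fun x hx => Units.mk0 x (by simpa using hx))
        all_goals simp
      · intro x _ hx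
        have : x = 0 := by simpa using hx
        rw [this, zero_pow]; omega
    · intro i hi
      rw [mem_range] at hi
      rw [FiniteField.sum_pow_lt_card_sub_one, mul_zero]
      rw [ZMod.card]; omega
  have h6' : ∑ j ∈ range p, (j : ZMod p) ^ m * ((j.descFactorial m : ℕ) : ZMod p) • (1 : ZMod p) = -1 := by
    simpa using h6
  simp only [nsmul_eq_mul, mul_one, smul_eq_mul] at h5 h6'
  rw [h6'] at h5
  have h11 : (m.factorial : ZMod p) * ∏ k ∈ range m, (((2 * k + 1 : ℕ) : ZMod p) - ((p - (2 * k + 1) : ℕ) : ZMod p)) = -1 := by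
    rw [← ZMod.wilsons_lemma p, show p - 1 = 2 * m by omega]
    have h12 : ∀ k ∈ range m, (((2 * k + 1 : ℕ) : ZMod p) - ((p - (2 * k + 1) : ℕ) : ZMod p)) = ((2 * (2 * k + 1) : ℕ) : ZMod p) := by
      intro k hk
      rw [mem_range] at hk
      rw [Nat.cast_sub (by omega)]
      simp; ring
    rw [prod_congr rfl h12]
    have h13 : ∀ m : ℕ, m.factorial * ∏ k ∈ range m, (2 * (2 * k + 1)) = (2 * m).factorial := by
      intro m
      induction m with
      | zero => simp
      | succ m ih =>
        rw [prod_range_succ, show 2 * (m + 1) = 2 * m + 1 + 1 by ring, Nat.factorial_succ, Nat.factorial_succ, Nat.factorial_succ, ← ih]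
        ring
    rw [← h13]; push_cast; rfl
  rw [mul_comm (m.factorial : ZMod p)] at h11
  have h14 : (-1 : ZMod p) = - (c : ZMod p) := by
    linear_combination h5 + (c : ZMod p) * h11
  rcases hc with hc | hc
  · exact hc
  · exfalso
    rw [hc] at h14
    have h15 : ((2 : ℕ) : ZMod p) = 0 := by push_cast at h14 ⊢; linear_combination -h14
    rw [ZMod.natCast_eq_zero_iff] at h15
    have := Nat.le_of_dvd (by norm_num) h15
    omega

noncomputable def chi (p : ℕ) [Fact (Nat.Prime p)] : DirichletCharacter ℂ p :=
  (quadraticChar (ZMod p)).ringHomComp (Int.castRingHom ℂ)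

lemma chi_apply (p : ℕ) [Fact (Nat.Prime p)] (a : ℤ) : chi p a = (legendreSym p a : ℂ) := by
  simp [chi, legendreSym]

lemma chi_apply_nat (p : ℕ) [Fact (Nat.Prime p)] (a : ℕ) : chi p a = (legendreSym p a : ℂ) := by
  simp [chi, legendreSym]

lemma chi_ne_one (p : ℕ) [Fact (Nat.Prime p)] (hp : p % 4 = 1) : chi p ≠ 1 := by
  intro h
  have h2 : ringChar (ZMod p) ≠ 2 := by rw [ZMod.ringChar_zmod_n]; omega
  obtain ⟨a, ha⟩ := quadraticChar_exists_neg_one' h2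
  have := congrArg (fun χ => χ (a : ZMod p)) h
  simp [chi, ha] at this
  norm_num at this

lemma stdAddChar_eq (p : ℕ) [NeZero p] (x : ZMod p) : ZMod.stdAddChar x = zt p ^ x.val := by
  rw [ZMod.stdAddChar_apply, ZMod.toCircle_apply, zt, ← Complex.exp_nat_mul]
  congr 1; ring

lemma sum_zmod (p : ℕ) [NeZero p] (F : ZMod p → ℂ) : ∑ x : ZMod p, F x = ∑ j ∈ range p, F j := by
  apply sum_bij' (fun (x : ZMod p) _ => x.val) (fun (j : ℕ) _ => (j : ZMod p))
  · intro x _; rw [mem_range]; exact ZMod.val_lt x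
  · simp
  · simp
  · intro j hj; exact ZMod.val_cast_of_lt (mem_range.1 hj)
  · simp

lemma chi_neg_one (p : ℕ) [hpp : Fact (Nat.Prime p)] (hp : p % 4 = 1) : chi p (-1) = 1 := by
  have := legendreSym.at_neg_one (p := p) (by omega)
  have h2 := chi_apply p (-1)
  rw [this, ZMod.χ₄_nat_one_mod_four hp] at h2
  simpa using h2

lemma gauss_eq (p : ℕ) [hpp : Fact (Nat.Prime p)] (hp : p % 4 = 1) :
    gaussSum (chi p) ZMod.stdAddChar = (Real.sqrt p : ℂ) := by
  have h1 : (gaussSum (chi p) ZMod.stdAddChar) ^ 2 = p := by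
    rw [gaussSum_sq (chi_ne_one p hp) ((quadraticChar_isQuadratic _).comp _) (ZMod.isPrimitive_stdAddChar p),
      chi_neg_one p hp, ZMod.card, one_mul]
  have h2 : gaussSum (chi p) ZMod.stdAddChar = ∑ j ∈ range p, (legendreSym p j : ℂ) * zt p ^ j := by
    rw [gaussSum, sum_zmod]
    apply sum_congr rfl
    intro j hj
    rw [chi_apply_nat, stdAddChar_eq, ZMod.val_cast_of_lt (mem_range.1 hj)]
  rw [← Dp_pos p hp]
  rw [← Dp_sq p hp, sq_eq_sq_iff_eq_or_eq_neg] at h1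
  rcases h1 with h1 | h1
  · exact h1
  · have := gauss_sign_one p hp (-1) (Or.inr rfl) (by rw [← h2, h1]; simp)
    norm_num at this

section partB
open Filter Topology MeasureTheory

lemma chi_nat_add (p : ℕ) [Fact (Nat.Prime p)] (a b : ℕ) : chi p ((p * a + b : ℕ) : ZMod p) = chi p (b : ZMod p) := by
  simp

lemma chi_sum_zero (p : ℕ) [Fact (Nat.Prime p)] (hp : p % 4 = 1) : ∑ j ∈ range p, chi p j = 0 := by
  rw [← sum_zmod p (fun x => chi p x)]
  exact MulChar.sum_eq_zero_of_ne_one (chi_ne_one p hp)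

lemma chi_norm_le (p : ℕ) [Fact (Nat.Prime p)] (x : ZMod p) : ‖chi p x‖ ≤ 1 :=
  DirichletCharacter.norm_le_one _ x

lemma chi_bdd_range (p : ℕ) [hpp : Fact (Nat.Prime p)] (hp : p % 4 = 1) (n : ℕ) :
    ‖∑ k ∈ range n, chi p k‖ ≤ p := by
  have h1 : ∀ q r : ℕ, ∑ k ∈ range (p * q + r), chi p k = ∑ k ∈ range r, chi p k := by
    intro q
    induction q with
    | zero => simp
    | succ q ih =>
      intro r
      rw [show p * (q + 1) + r = p * q + (p + r) by ring, ih, sum_range_add, chi_sum_zero p hp, zero_add]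
      simp
  rw [← Nat.div_add_mod n p, h1]
  refine (norm_sum_le _ _).trans ((sum_le_sum (fun (k : ℕ) _ => chi_norm_le p (k : ZMod p))).trans ?_)
  simp
  exact (Nat.mod_lt _ hpp.out.pos).le

lemma chi_zero (p : ℕ) [hpp : Fact (Nat.Prime p)] : chi p ((0 : ℕ) : ZMod p) = 0 := by
  simpa using MulChar.map_zero (chi p)

lemma chi_bdd0 (p : ℕ) [hpp : Fact (Nat.Prime p)] (hp : p % 4 = 1) (n : ℕ) :
    ‖∑ k ∈ Icc 0 n, chi p k‖ ≤ p := by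
  have := chi_bdd_range p hp (n + 1)
  rwa [Nat.range_eq_Icc_zero_sub_one _ (by omega)] at this

lemma chi_icc (p : ℕ) [hpp : Fact (Nat.Prime p)] (n : ℕ) :
    ∑ k ∈ Icc 1 n, chi p k = ∑ k ∈ Icc 0 n, chi p k := by
  rw [← Finset.sum_Ioc_add_eq_sum_Icc n.zero_le, chi_zero, add_zero]
  rfl

noncomputable def Ip (p : ℕ) [hpp : Fact (Nat.Prime p)] : ℂ :=
  ∫ t in Set.Ioi (1 : ℝ), (∑ k ∈ Icc 0 ⌊t⌋₊, chi p k) * (t : ℂ) ^ (-(2 : ℂ))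

lemma chi_sum_meas (p : ℕ) [hpp : Fact (Nat.Prime p)] :
    Measurable (fun t : ℝ => ∑ k ∈ Icc 0 ⌊t⌋₊, chi p k) :=
  (measurable_from_nat (f := fun n => ∑ k ∈ Icc 0 n, chi p k)).comp Nat.measurable_floor

lemma B1 (p : ℕ) [hpp : Fact (Nat.Prime p)] (hp : p % 4 = 1) :
    Tendsto (fun s : ℝ => LSeries (fun n => chi p n) s) (𝓝[>] 1) (𝓝 (Ip p)) := by
  have h1 : ∀ s : ℝ, 1 < s → LSeries (fun n => chi p n) s =
      s * ∫ t in Set.Ioi (1 : ℝ), (∑ k ∈ Icc 0 ⌊t⌋₊, chi p k) * (t : ℂ) ^ (-((s : ℂ) + 1)) := by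
    intro s hs
    rw [LSeries_eq_mul_integral (fun n => chi p n) (r := 0) le_rfl (by simp; linarith)]
    · simp only [chi_icc]
    · exact DirichletCharacter.LSeriesSummable_of_one_lt_re (chi p) (by simpa using hs)
    · simp only [chi_icc, Real.rpow_zero]
      rw [Asymptotics.isBigO_one_iff]
      exact isBoundedUnder_of ⟨p, fun n => chi_bdd0 p hp n⟩
  have h2 : Tendsto (fun s : ℝ => ∫ t in Set.Ioi (1 : ℝ), (∑ k ∈ Icc 0 ⌊t⌋₊, chi p k) * (t : ℂ) ^ (-((s : ℂ) + 1)))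
      (𝓝[>] 1) (𝓝 (Ip p)) := by
    unfold Ip
    apply tendsto_integral_filter_of_dominated_convergence (fun t : ℝ => p * t ^ (-2 : ℝ))
    · filter_upwards with s
      apply AEStronglyMeasurable.mul
      · exact (chi_sum_meas p).aestronglyMeasurable
      · exact (by fun_prop : Measurable (fun t : ℝ => (t : ℂ) ^ (-((s : ℂ) + 1)))).aestronglyMeasurable
    · filter_upwards [self_mem_nhdsWithin] with s hs
      filter_upwards [ae_restrict_mem measurableSet_Ioi] with t ht
      have ht' : (1 : ℝ) < t := ht
      have hs' : (1 : ℝ) < s := hs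
      rw [norm_mul, Complex.norm_cpow_eq_rpow_re_of_pos (by linarith)]
      apply mul_le_mul (chi_bdd0 p hp _) _ (by positivity) (by positivity)
      apply Real.rpow_le_rpow_of_exponent_le ht'.le
      simp; linarith
    · apply Integrable.const_mul
      exact integrableOn_Ioi_rpow_of_lt (by norm_num) one_pos
    · filter_upwards [ae_restrict_mem measurableSet_Ioi] with t ht
      have ht' : (1 : ℝ) < t := ht
      have ht0 : (t : ℂ) ≠ 0 := by exact_mod_cast (by linarith : t ≠ 0)
      apply Tendsto.const_mul
      have : ContinuousAt (fun s : ℝ => (t : ℂ) ^ (-((s : ℂ) + 1))) 1 := by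
        apply ContinuousAt.const_cpow _ (Or.inl ht0)
        fun_prop
      have h3 := this.tendsto.mono_left (nhdsWithin_le_nhds (s := Set.Ioi 1))
      convert h3 using 3
      push_cast; norm_num
  have h3 : Tendsto (fun s : ℝ => (s : ℂ)) (𝓝[>] 1) (𝓝 1) := by
    have : Continuous (fun s : ℝ => (s : ℂ)) := Complex.continuous_ofReal
    simpa using (this.tendsto 1).mono_left (nhdsWithin_le_nhds (s := Set.Ioi 1))
  have h4 := h3.mul h2
  rw [one_mul] at h4
  refine h4.congr' ?_
  filter_upwards [self_mem_nhdsWithin] with s hs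
  exact (h1 s hs).symm

lemma B2 (p : ℕ) [hpp : Fact (Nat.Prime p)] (hp : p % 4 = 1) :
    Tendsto (fun n : ℕ => ∑ k ∈ range n, chi p k / k) atTop (𝓝 (Ip p)) := by
  have hd : ∀ t : ℝ, 1 ≤ t → HasDerivAt (fun t : ℝ => ((t : ℂ))⁻¹) (-((t : ℂ) ^ (-(2 : ℂ)))) t := by
    intro t ht
    have ht0 : (t : ℂ) ≠ 0 := by exact_mod_cast (by linarith : t ≠ 0)
    have h1 := (hasDerivAt_inv ht0).comp_ofReal
    convert h1 using 1
    rw [Complex.cpow_neg]; norm_cast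
  have h := tendsto_sum_mul_atTop_nhds_one_sub_integral₀ (𝕜 := ℂ) (fun k => chi p k) (f := fun t : ℝ => ((t : ℂ))⁻¹)
    (l := 0) (g := fun t : ℝ => t ^ (-2 : ℝ)) (chi_zero p)
    (fun t ht => (hd t ht).differentiableAt) ?_ ?_ ?_ ?_
  · have e : ∀ n : ℕ, ∑ k ∈ Icc (0:ℕ) n, ((((k:ℕ) : ℝ) : ℂ))⁻¹ * chi p (k : ZMod p) = ∑ k ∈ range (n + 1), chi p k / k := by
      intro n
      rw [Nat.range_eq_Icc_zero_sub_one _ (by omega)]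
      apply sum_congr rfl; intros; simp; ring
    simp only [e] at h
    rw [tendsto_add_atTop_iff_nat (f := fun n : ℕ => ∑ k ∈ range n, chi p k / k) 1] at h
    convert h using 2
    rw [zero_sub, ← integral_neg, Ip]
    apply setIntegral_congr_fun measurableSet_Ioi
    intro t ht
    have ht' : (1 : ℝ) < t := ht
    beta_reduce
    rw [(hd t ht'.le).deriv]; ring
  · apply ContinuousOn.locallyIntegrableOn _ measurableSet_Ici
    have : ContinuousOn (fun t : ℝ => (-((t : ℂ) ^ (-(2 : ℂ))))) (Set.Ici 1) := by
      intro t ht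
      have ht' : (1 : ℝ) ≤ t := ht
      apply ContinuousAt.continuousWithinAt
      apply ContinuousAt.neg
      refine ContinuousAt.cpow Complex.continuous_ofReal.continuousAt continuousAt_const (Or.inl ?_)
      simp; linarith
    exact this.congr (fun t ht => (hd t ht).deriv)
  · rw [tendsto_zero_iff_norm_tendsto_zero]
    have h0 : Tendsto (fun n : ℕ => (p : ℝ) * ((n : ℝ))⁻¹) atTop (𝓝 0) := by
      simpa using (tendsto_inv_atTop_nhds_zero_nat (𝕜 := ℝ)).const_mul (p : ℝ)
    refine squeeze_zero (fun _ => norm_nonneg _) (fun n => ?_) h0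
    rw [norm_mul, mul_comm]
    apply mul_le_mul (chi_bdd0 p hp _) _ (by positivity) (by positivity)
    simp
  · rw [Asymptotics.isBigO_iff]
    refine ⟨p, ?_⟩
    filter_upwards [eventually_ge_atTop 1] with t ht
    rw [(hd t ht).deriv, norm_mul, mul_comm, norm_neg, Complex.norm_cpow_eq_rpow_re_of_pos (by linarith)]
    have : (0 : ℝ) ≤ t ^ (-2 : ℝ) := by positivity
    rw [Real.norm_of_nonneg this]
    simp only [Complex.neg_re, Complex.re_ofNat]
    exact mul_le_mul_of_nonneg_right (chi_bdd0 p hp _) this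
  · exact ⟨Set.Ioi 1, Ioi_mem_atTop 1, integrableOn_Ioi_rpow_of_lt (by norm_num) one_pos⟩

lemma chi_gauss (p : ℕ) [hpp : Fact (Nat.Prime p)] (hp : p % 4 = 1) (n : ℕ) :
    ∑ j ∈ range p, chi p j * (zt p ^ j) ^ n = chi p n * Real.sqrt p := by
  have h1 : ∀ j ∈ range p, chi p j * (zt p ^ j) ^ n = chi p j * (ZMod.stdAddChar.mulShift (n : ZMod p)) (j : ZMod p) := by
    intro j hj
    rw [AddChar.mulShift_apply, ← nsmul_eq_mul, AddChar.map_nsmul_eq_pow, stdAddChar_eq, ZMod.val_cast_of_lt (mem_range.1 hj)]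
  rw [sum_congr rfl h1, ← sum_zmod p (fun x => chi p x * (ZMod.stdAddChar.mulShift (n : ZMod p)) x)]
  change gaussSum (chi p) _ = _
  have hq : (chi p)⁻¹ = chi p := ((quadraticChar_isQuadratic (ZMod p)).comp (Int.castRingHom ℂ)).inv
  rw [gaussSum_mulShift_of_isPrimitive, gauss_eq p hp, hq]
  rw [DirichletCharacter.isPrimitive_def]
  rcases (Nat.dvd_prime hpp.out).1 (DirichletCharacter.conductor_dvd_level (chi p)) with h | h
  · exact absurd ((DirichletCharacter.eq_one_iff_conductor_eq_one (χ := chi p)).2 h) (chi_ne_one p hp)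
  · exact h

lemma B3 (p : ℕ) [hpp : Fact (Nat.Prime p)] (hp : p % 4 = 1) :
    Ip p * Real.sqrt p = ∑ j ∈ range p, chi p j * (- Complex.log (1 - zt p ^ j)) := by
  have hprim := zt_prim p hpp.out.ne_zero
  have h1 := (Complex.tendsto_tsum_powerSeries_nhdsWithin_lt (B2 p hp))
  rw [tendsto_map'_iff] at h1
  have h2 := h1.mul_const (Real.sqrt p : ℂ)
  refine tendsto_nhds_unique h2 ?_
  have h3 : Tendsto (fun x : ℝ => ∑ j ∈ range p, chi p j * (- Complex.log (1 - x * zt p ^ j))) (𝓝[<] 1)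
      (𝓝 (∑ j ∈ range p, chi p j * (- Complex.log (1 - zt p ^ j)))) := by
    apply tendsto_finsetSum
    intro j hj
    by_cases hj0 : j = 0
    · subst hj0; simp only [chi_zero, zero_mul]; exact tendsto_const_nhds
    apply Tendsto.const_mul
    apply Tendsto.neg
    have hne : zt p ^ j ≠ 1 := hprim.pow_ne_one_of_pos_of_lt hj0 (mem_range.1 hj)
    have hn1 : ‖zt p ^ j‖ = 1 := by rw [norm_pow, hprim.norm'_eq_one hpp.out.ne_zero, one_pow]
    have hre : (zt p ^ j).re < 1 := by
      rcases lt_or_eq_of_le ((Complex.re_le_norm _).trans hn1.le) with h | h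
      · exact h
      · exfalso; apply hne
        have h5 := Complex.sq_norm (zt p ^ j)
        rw [hn1, Complex.normSq_apply, h] at h5
        apply Complex.ext
        · simpa using h
        · simp; nlinarith
    have hc : ContinuousAt (fun x : ℝ => Complex.log (1 - x * zt p ^ j)) 1 := by
      apply ContinuousAt.clog
      · fun_prop
      · left; simpa using hre
    have := hc.tendsto.mono_left (nhdsWithin_le_nhds (s := Set.Iio 1))
    simpa using this
  refine h3.congr' ?_
  filter_upwards [self_mem_nhdsWithin, mem_nhdsWithin_of_mem_nhds (Ioi_mem_nhds (show (0 : ℝ) < 1 by norm_num))] with x hx hx0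
  have hx' : x < 1 := hx
  have hx0' : 0 < x := hx0
  have h4 : ∀ j ∈ range p, HasSum (fun n : ℕ => chi p j * ((x * zt p ^ j) ^ n / n)) (chi p j * (- Complex.log (1 - x * zt p ^ j))) := by
    intro j _
    apply HasSum.mul_left
    apply Complex.hasSum_taylorSeries_neg_log
    rw [norm_mul, norm_pow, hprim.norm'_eq_one hpp.out.ne_zero, one_pow, mul_one, Complex.norm_real, Real.norm_of_nonneg hx0'.le]
    exact hx'
  have h5 := (hasSum_sum h4).tsum_eq
  rw [← h5]
  simp only [Function.comp]
  rw [← tsum_mul_right]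
  apply tsum_congr
  intro n
  have := chi_gauss p hp n
  calc _ = (∑ j ∈ range p, chi p j * (zt p ^ j) ^ n) * (x ^ n / n) := by
        rw [sum_mul]; apply sum_congr rfl; intros; rw [mul_pow]; ring
    _ = _ := by rw [this]; ring

end partB

section partC
open Ideal

variable {S : Type*} [CommRing S] [IsDedekindDomain S] [Module.Free ℤ S] [Module.Finite ℤ S]

lemma sup_rec_aux (I J M : Ideal S) (h : J ⊔ M = ⊤) (hM : M ≤ I) : I * J ⊔ M = I := by
  apply le_antisymm
  · exact sup_le Ideal.mul_le_left hM
  · have h1 : I * (J ⊔ M) ≤ I * J ⊔ M := by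
      rw [Ideal.mul_sup]
      exact sup_le_sup_left Ideal.mul_le_right _
    rwa [h, Ideal.mul_top] at h1

lemma sup_prod_aux (L M N : Ideal S) (h : M ⊔ N = ⊤) (hMN : M * N ≤ L) : (L ⊔ M) * (L ⊔ N) = L := by
  apply le_antisymm
  · rw [Ideal.sup_mul, Ideal.mul_sup, Ideal.mul_sup]
    exact sup_le (sup_le Ideal.mul_le_left Ideal.mul_le_left) (sup_le Ideal.mul_le_right hMN)
  · have h1 : L * (M ⊔ N) ≤ (L ⊔ M) * (L ⊔ N) := by
      rw [Ideal.mul_sup, mul_comm L M]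
      exact sup_le (Ideal.mul_mono le_sup_right le_sup_left) (Ideal.mul_mono le_sup_left le_sup_right)
    rwa [h, Ideal.mul_top] at h1

lemma card_mul_coprime (m n : ℕ) (hm : m ≠ 0) (hn : n ≠ 0) (hc : Nat.Coprime m n) :
    Nat.card {I : Ideal S // absNorm I = m * n} =
      Nat.card {I : Ideal S // absNorm I = m} * Nat.card {I : Ideal S // absNorm I = n} := by
  rw [← Nat.card_prod]
  symm
  have hcop : span {(m : S)} ⊔ span {(n : S)} = ⊤ := by
    rw [← Ideal.isCoprime_iff_sup_eq, Ideal.isCoprime_span_singleton_iff]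
    have := (Nat.isCoprime_iff_coprime.2 hc).map (Int.castRingHom S)
    simpa using this
  have hmem : ∀ (I : Ideal S) (k : ℕ), absNorm I = k → span {(k : S)} ≤ I := by
    intro I k h; rw [← h]; exact span_singleton_absNorm_le I
  have hcopI : ∀ (I J : Ideal S), absNorm I = m → absNorm J = n → I ⊔ J = ⊤ := by
    intro I J hI hJ
    rw [eq_top_iff, ← hcop]
    exact sup_le_sup (hmem I m hI) (hmem J n hJ)
  have hrec : ∀ (I J : Ideal S), absNorm I = m → absNorm J = n →
      I * J ⊔ span {(m : S)} = I ∧ I * J ⊔ span {(n : S)} = J := by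
    intro I J hI hJ
    have hJm : J ⊔ span {(m : S)} = ⊤ := by
      rw [eq_top_iff, ← hcop, sup_comm]; exact sup_le_sup_right (hmem J n hJ) _
    have hIn : I ⊔ span {(n : S)} = ⊤ := by
      rw [eq_top_iff, ← hcop]; exact sup_le_sup_right (hmem I m hI) _
    exact ⟨sup_rec_aux I J _ hJm (hmem I m hI), by rw [mul_comm]; exact sup_rec_aux J I _ hIn (hmem J n hJ)⟩
  refine Nat.card_congr (Equiv.ofBijective
    (fun x : {I : Ideal S // absNorm I = m} × {I : Ideal S // absNorm I = n} =>
      (⟨x.1.1 * x.2.1, by rw [map_mul, x.1.2, x.2.2]⟩ : {I : Ideal S // absNorm I = m * n})) ⟨?_, ?_⟩)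
  · rintro ⟨⟨I, hI⟩, ⟨J, hJ⟩⟩ ⟨⟨I', hI'⟩, ⟨J', hJ'⟩⟩ h
    simp only [Subtype.mk.injEq] at h
    have h1 := hrec I J hI hJ
    have h2 := hrec I' J' hI' hJ'
    rw [h] at h1
    have e1 := h1.1.symm.trans h2.1
    have e2 := h1.2.symm.trans h2.2
    subst e1; subst e2; rfl
  · rintro ⟨L, hL⟩
    have hprod : (L ⊔ span {(m : S)}) * (L ⊔ span {(n : S)}) = L := by
      have hmn : span {(m : S)} * span {(n : S)} ≤ L := by
        rw [span_singleton_mul_span_singleton, ← Nat.cast_mul]; exact hmem L _ hL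
      exact sup_prod_aux _ _ _ hcop hmn
    have hN := congrArg absNorm hprod
    rw [map_mul, hL] at hN
    have d1 : absNorm (L ⊔ span {(m : S)}) ∣ m ^ Module.finrank ℤ S := by
      rw [← absNorm_span_natCast]; exact absNorm_dvd_absNorm_of_le le_sup_right
    have d2 : absNorm (L ⊔ span {(n : S)}) ∣ n ^ Module.finrank ℤ S := by
      rw [← absNorm_span_natCast]; exact absNorm_dvd_absNorm_of_le le_sup_right
    have c1 : Nat.Coprime (absNorm (L ⊔ span {(m : S)})) n :=
      Nat.Coprime.coprime_dvd_left d1 (hc.pow_left _)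
    have c2 : Nat.Coprime (absNorm (L ⊔ span {(n : S)})) m :=
      Nat.Coprime.coprime_dvd_left d2 (hc.symm.pow_left _)
    have e1 : absNorm (L ⊔ span {(m : S)}) ∣ m :=
      c1.dvd_of_dvd_mul_right (hN ▸ dvd_mul_right _ _)
    have e2 : absNorm (L ⊔ span {(n : S)}) ∣ n :=
      c2.dvd_of_dvd_mul_left (hN ▸ dvd_mul_left _ _)
    have f1 : m ∣ absNorm (L ⊔ span {(m : S)}) :=
      (c2.symm).dvd_of_dvd_mul_right (hN.symm ▸ dvd_mul_right _ _)
    have f2 : n ∣ absNorm (L ⊔ span {(n : S)}) :=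
      (c1.symm).dvd_of_dvd_mul_left (hN.symm ▸ dvd_mul_left _ _)
    exact ⟨⟨⟨_, Nat.dvd_antisymm e1 f1⟩, ⟨_, Nat.dvd_antisymm e2 f2⟩⟩, Subtype.ext hprod⟩

lemma dvd_q_pow (q k : ℕ) (I : Ideal S) (hI : absNorm I = q ^ k) : I ∣ span {(q : S)} ^ k := by
  rw [Ideal.dvd_iff_le, span_singleton_pow, ← Nat.cast_pow, ← hI]
  exact span_singleton_absNorm_le I

lemma prime_of_norm (q : ℕ) (hq : q.Prime) (P : Ideal S) (hP : absNorm P = q) : Prime P := by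
  apply Ideal.prime_of_isPrime
  · rintro rfl; rw [absNorm_bot] at hP; exact hq.ne_zero hP.symm
  · exact isPrime_of_irreducible_absNorm (hP ▸ hq)

lemma card_ram (q k : ℕ) (hq : q.Prime) (P : Ideal S) (hP : absNorm P = q)
    (hPP : P ^ 2 = span {(q : S)}) : Nat.card {I : Ideal S // absNorm I = q ^ k} = 1 := by
  rw [Nat.card_eq_one_iff_unique]
  refine ⟨⟨?_⟩, ⟨⟨P ^ k, by rw [map_pow, hP]⟩⟩⟩
  have key : ∀ I : Ideal S, absNorm I = q ^ k → I = P ^ k := by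
    intro I hI
    have h := dvd_q_pow q k I hI
    rw [← hPP, ← pow_mul, dvd_prime_pow (prime_of_norm q hq P hP)] at h
    obtain ⟨i, -, hi⟩ := h
    rw [associated_iff_eq] at hi
    subst hi
    rw [map_pow, hP] at hI
    rw [Nat.pow_right_injective hq.two_le hI]
  rintro ⟨I, hI⟩ ⟨J, hJ⟩
  exact Subtype.ext ((key I hI).trans (key J hJ).symm)

lemma card_inert (q k : ℕ) (hq : q.Prime) (hP : Prime (span {(q : S)})) (h2 : Module.finrank ℤ S = 2) :
    Nat.card {I : Ideal S // absNorm I = q ^ k} = if Even k then 1 else 0 := by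
  have key : ∀ I : Ideal S, absNorm I = q ^ k → ∃ i, k = 2 * i ∧ I = span {(q : S)} ^ i := by
    intro I hI
    have h := dvd_q_pow q k I hI
    rw [dvd_prime_pow hP] at h
    obtain ⟨i, -, hi⟩ := h
    rw [associated_iff_eq] at hi
    subst hi
    rw [map_pow, absNorm_span_natCast, h2, ← pow_mul] at hI
    exact ⟨i, (Nat.pow_right_injective hq.two_le hI).symm, rfl⟩
  split_ifs with hk
  · rw [Nat.card_eq_one_iff_unique]
    obtain ⟨j, hj⟩ := hk
    refine ⟨⟨?_⟩, ⟨⟨span {(q : S)} ^ j, ?_⟩⟩⟩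
    · rintro ⟨I, hI⟩ ⟨J, hJ⟩
      obtain ⟨i, hi, rfl⟩ := key I hI
      obtain ⟨i', hi', rfl⟩ := key J hJ
      have : i = i' := by omega
      subst this; rfl
    · rw [map_pow, absNorm_span_natCast, h2, ← pow_mul]; congr 1; omega
  · rw [Nat.card_eq_zero]
    left
    constructor
    rintro ⟨I, hI⟩
    obtain ⟨i, hi, -⟩ := key I hI
    exact hk ⟨i, by omega⟩

lemma card_split (q k : ℕ) (hq : q.Prime) (P Q : Ideal S) (hP : absNorm P = q) (hQ : absNorm Q = q)
    (hne : P ≠ Q) (hPQ : P * Q = span {(q : S)}) :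
    Nat.card {I : Ideal S // absNorm I = q ^ k} = k + 1 := by
  have pP := prime_of_norm q hq P hP
  have pQ := prime_of_norm q hq Q hQ
  rw [← Nat.card_fin (k + 1)]
  symm
  refine Nat.card_congr (Equiv.ofBijective
    (fun i : Fin (k + 1) => (⟨P ^ (i : ℕ) * Q ^ (k - i), by
      rw [map_mul, map_pow, map_pow, hP, hQ, ← pow_add]; congr 1; omega⟩ : {I : Ideal S // absNorm I = q ^ k})) ⟨?_, ?_⟩)
  · have key : ∀ i j : ℕ, i < j → j ≤ k → P ^ i * Q ^ (k - i) ≠ P ^ j * Q ^ (k - j) := by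
      intro i j hij hj h
      rw [show j = i + (j - i) by omega, pow_add, mul_assoc] at h
      have h' := mul_left_cancel₀ (pow_ne_zero i pP.ne_zero) h
      have hd : P ∣ Q ^ (k - i) := by
        rw [h', ]
        exact (dvd_pow_self P (by omega)).trans (dvd_mul_right _ _)
      have hd2 := pP.dvd_of_dvd_pow hd
      rw [Prime.dvd_prime_iff_associated pP pQ, associated_iff_eq] at hd2
      exact hne hd2
    rintro ⟨i, hi⟩ ⟨j, hj⟩ h
    simp only [Subtype.mk.injEq] at h
    rcases lt_trichotomy i j with h1 | h1 | h1
    · exact absurd h (key i j h1 (by omega))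
    · subst h1; rfl
    · exact absurd h.symm (key j i h1 (by omega))
  · rintro ⟨I, hI⟩
    have h := dvd_q_pow q k I hI
    rw [← hPQ, mul_pow] at h
    obtain ⟨A, B, hA, hB, rfl⟩ := exists_dvd_and_dvd_of_dvd_mul h
    rw [dvd_prime_pow pP] at hA
    rw [dvd_prime_pow pQ] at hB
    obtain ⟨i, hi, hA⟩ := hA
    obtain ⟨j, hj, hB⟩ := hB
    rw [associated_iff_eq] at hA hB
    subst hA; subst hB
    have hI' := hI
    rw [map_mul, map_pow, map_pow, hP, hQ, ← pow_add] at hI'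
    have := Nat.pow_right_injective hq.two_le hI'
    refine ⟨⟨i, by omega⟩, Subtype.ext ?_⟩
    simp only
    congr 2; omega



lemma C_split (θ : S) (m : ℤ) (hθ : θ ^ 2 = θ + m) (hb : ∀ z : S, ∃ a b : ℤ, z = a + b * θ)
    (hu : ∀ a b : ℤ, (a : S) + b * θ = 0 → a = 0 ∧ b = 0) (h2 : Module.finrank ℤ S = 2)
    (q k : ℕ) (hq : q.Prime) (c : ℤ) (hc : (q : ℤ) ∣ c ^ 2 - c - m) (hc2 : ¬ (q : ℤ) ∣ 2 * c - 1) :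
    Nat.card {I : Ideal S // absNorm I = q ^ k} = k + 1 := by
  have hco : IsCoprime (q : ℤ) (2 * c - 1) := by
    rw [(Nat.prime_iff_prime_int.1 hq).irreducible.coprime_iff_not_dvd]; exact hc2
  obtain ⟨u, v, huv⟩ := hco
  have huv' : (u : S) * q + v * (2 * c - 1) = 1 := by exact_mod_cast congrArg (Int.cast : ℤ → S) huv
  obtain ⟨t, ht⟩ := hc
  have ht' : (c : S) ^ 2 - c - m = q * t := by exact_mod_cast congrArg (Int.cast : ℤ → S) ht
  set P : Ideal S := span {(q : S), θ - c} with hPd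
  set Q : Ideal S := span {(q : S), θ - (1 - c)} with hQd
  have qP : (q : S) ∈ P := subset_span (by simp)
  have qQ : (q : S) ∈ Q := subset_span (by simp)
  have tP : θ - c ∈ P := subset_span (by simp)
  have tQ : θ - (1 - c) ∈ Q := subset_span (by simp)
  have hPQ : P * Q = span {(q : S)} := by
    apply le_antisymm
    · rw [hPd, hQd, Ideal.span_mul_span', span_le]
      rintro x ⟨y, hy, z, hz, rfl⟩
      simp only [Set.mem_insert_iff, Set.mem_singleton_iff] at hy hz
      simp only [SetLike.mem_coe, mem_span_singleton]
      rcases hy with rfl | rfl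
      · exact dvd_mul_right _ _
      · rcases hz with rfl | rfl
        · exact dvd_mul_left _ _
        · exact ⟨-t, by linear_combination hθ - ht'⟩
    · rw [span_singleton_le_iff_mem]
      have a1 := Ideal.mul_mem_mul qP qQ
      have a2 := Ideal.mul_mem_mul qP tQ
      have a3 := Ideal.mul_mem_mul tP qQ
      have : (q : S) = u * (q * q) + v * (q * (θ - (1 - c)) - (θ - c) * q) := by
        linear_combination (-(q : S)) * huv'
      rw [this]
      exact add_mem (Ideal.mul_mem_left _ _ a1) (Ideal.mul_mem_left _ _ (sub_mem a2 a3))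
  have hnd : ∀ d : ℤ, ¬ (θ - d ∈ span {(q : S)}) := by
    intro d hd
    rw [mem_span_singleton] at hd
    obtain ⟨w, hw⟩ := hd
    obtain ⟨a, b, rfl⟩ := hb w
    have := hu (-d - q * a) (1 - q * b) (by push_cast; linear_combination hw)
    have h3 : (q : ℤ) ∣ 1 := ⟨b, by linarith [this.2]⟩
    exact (Nat.prime_iff_prime_int.1 hq).not_dvd_one h3
  have hP1 : absNorm P ≠ 1 := by
    rw [Ne, absNorm_eq_one_iff]
    intro h
    rw [h, Ideal.top_mul] at hPQ
    rw [hPQ] at tQ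
    exact hnd (1 - c) (by push_cast; exact tQ)
  have hQ1 : absNorm Q ≠ 1 := by
    rw [Ne, absNorm_eq_one_iff]
    intro h
    rw [h, Ideal.mul_top] at hPQ
    rw [hPQ] at tP
    exact hnd c tP
  have hN : absNorm P * absNorm Q = q ^ 2 := by
    rw [← map_mul, hPQ, absNorm_span_natCast, h2]
  obtain ⟨nP, nQ⟩ := (Nat.Prime.mul_eq_prime_sq_iff hq hP1 hQ1).1 hN
  refine card_split q k hq P Q nP nQ ?_ hPQ
  intro h
  apply hP1
  rw [absNorm_eq_one_iff, eq_top_iff_one, ← huv']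
  rw [← h] at tQ
  have e : (2 * (c : S) - 1) = (θ - (1 - c)) - (θ - c) := by ring
  rw [e]
  exact add_mem (Ideal.mul_mem_left _ _ qP) (Ideal.mul_mem_left _ _ (sub_mem tQ tP))

lemma C_inert (θ : S) (m : ℤ) (hθ : θ ^ 2 = θ + m) (h2 : Module.finrank ℤ S = 2)
    (q k : ℕ) (hq : q.Prime) (hc : ∀ c : ℤ, ¬ (q : ℤ) ∣ c ^ 2 - c - m) :
    Nat.card {I : Ideal S // absNorm I = q ^ k} = if Even k then 1 else 0 := by
  refine card_inert q k hq ?_ h2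
  have hNq : absNorm (span {(q : S)}) = q ^ 2 := by rw [absNorm_span_natCast, h2]
  have hne : span {(q : S)} ≠ ⊤ := by
    intro h
    rw [h, absNorm_top] at hNq
    have := hq.one_lt; nlinarith
  obtain ⟨P, hPm, hPle⟩ := exists_le_maximal _ hne
  have hd : absNorm P ∣ q ^ 2 := hNq ▸ absNorm_dvd_absNorm_of_le hPle
  have hP0 : P ≠ ⊥ := by
    rintro rfl
    rw [absNorm_bot, zero_dvd_iff] at hd
    exact pow_ne_zero 2 hq.ne_zero hd
  have hPp : Prime P := Ideal.prime_of_isPrime hP0 hPm.isPrime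
  have hP1 : P ≠ ⊤ := hPm.ne_top
  have qP : (q : S) ∈ P := hPle (mem_span_singleton_self _)
  rw [Nat.dvd_prime_pow hq] at hd
  obtain ⟨i, hi, hN⟩ := hd
  interval_cases i
  · rw [pow_zero, absNorm_eq_one_iff] at hN; exact absurd hN hP1
  · exfalso
    rw [pow_one] at hN
    have hcard : Nat.card (S ⧸ P) = q := by rw [← hN, absNorm_apply, Submodule.cardQuot_apply]
    have hfin : Finite (S ⧸ P) := Nat.finite_of_card_ne_zero (by rw [hcard]; exact hq.ne_zero)
    have := Fintype.ofFinite (S ⧸ P)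
    have hcard' : Fintype.card (S ⧸ P) = q := by rw [← Nat.card_eq_fintype_card, hcard]
    let e := ZMod.ringEquivOfPrime (S ⧸ P) hq hcard'
    obtain ⟨c, hcc⟩ := ZMod.intCast_surjective (e.symm (Ideal.Quotient.mk P θ))
    have h1 : Ideal.Quotient.mk P θ = Ideal.Quotient.mk P (c : S) := by
      rw [map_intCast, ← map_intCast e c, hcc, RingEquiv.apply_symm_apply]
    have h3 : ((c ^ 2 - c - m : ℤ) : S) ∈ P := by
      rw [← Ideal.Quotient.eq_zero_iff_mem]
      push_cast
      rw [map_sub, map_sub, map_pow, ← h1, ← map_pow, hθ, map_add]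
      simp
    have hco : IsCoprime (q : ℤ) (c ^ 2 - c - m) := by
      rw [(Nat.prime_iff_prime_int.1 hq).irreducible.coprime_iff_not_dvd]; exact hc c
    obtain ⟨u, v, huv⟩ := hco
    have huv' : (u : S) * q + v * ((c ^ 2 - c - m : ℤ) : S) = 1 := by
      exact_mod_cast congrArg (Int.cast : ℤ → S) huv
    apply hP1
    rw [eq_top_iff_one, ← huv']
    exact add_mem (Ideal.mul_mem_left _ _ qP) (Ideal.mul_mem_left _ _ h3)
  · obtain ⟨J, hJ⟩ := Ideal.dvd_iff_le.2 hPle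
    rw [hJ, map_mul, hN] at hNq
    have : absNorm J = 1 := by
      have h0 : 0 < q ^ 2 := pow_pos hq.pos 2
      exact Nat.eq_of_mul_eq_mul_left h0 (by rw [hNq, mul_one])
    rw [absNorm_eq_one_iff] at this
    rw [hJ, this, Ideal.mul_top]; exact hPp

lemma C_ram (θ : S) (m : ℤ) (hθ : θ ^ 2 = θ + m) (h2 : Module.finrank ℤ S = 2)
    (q k : ℕ) (hq : q.Prime) (hm : (q : ℤ) = 4 * m + 1) :
    Nat.card {I : Ideal S // absNorm I = q ^ k} = 1 := by
  have hm' : (q : S) = 4 * m + 1 := by exact_mod_cast congrArg (Int.cast : ℤ → S) hm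
  have hPP : (span {2 * θ - 1}) ^ 2 = span {(q : S)} := by
    rw [span_singleton_pow]; congr 2; rw [hm']; linear_combination 4 * hθ
  refine card_ram q k hq (span {2 * θ - 1}) ?_ hPP
  have := congrArg absNorm hPP
  rw [map_pow, absNorm_span_natCast, h2] at this
  exact Nat.pow_left_injective (n := 2) (by norm_num) this

lemma root_of_one (p : ℕ) [hpp : Fact (Nat.Prime p)] (hp : p % 4 = 1) (m : ℤ) (hm : (p : ℤ) = 4 * m + 1)
    (q : ℕ) (hq : q.Prime) (h : legendreSym p q = 1) : ∃ c : ℤ, (q : ℤ) ∣ c ^ 2 - c - m := by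
  by_cases hq2 : q = 2
  · subst hq2
    have hs : IsSquare (2 : ZMod p) := by
      have := (legendreSym.eq_one_iff p (a := 2) (by
        intro h0
        have h1 := (legendreSym.eq_zero_iff p 2).2 h0
        simp at h; rw [h] at h1; exact one_ne_zero h1)).1 (by simpa using h)
      simpa using this
    rw [ZMod.exists_sq_eq_two_iff (by rintro rfl; norm_num at hp)] at hs
    refine ⟨0, ?_⟩
    simp; omega
  · have : Fact q.Prime := ⟨hq⟩
    rw [← legendreSym.quadratic_reciprocity_one_mod_four hp hq2] at h
    have h0 : ((p : ℤ) : ZMod q) ≠ 0 := by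
      intro h0
      rw [(legendreSym.eq_zero_iff q p).2 h0] at h; exact zero_ne_one h
    obtain ⟨x, hx⟩ := (legendreSym.eq_one_iff q h0).1 h
    obtain ⟨y, rfl⟩ := ZMod.intCast_surjective x
    have hy : (q : ℤ) ∣ y ^ 2 - p := by
      rw [← ZMod.intCast_zmod_eq_zero_iff_dvd]
      push_cast; push_cast at hx; rw [hx]; ring
    have hqo : (q : ℤ) % 2 = 1 := by
      have := hq.eq_two_or_odd; omega
    have : ∃ z : ℤ, (q : ℤ) ∣ (2 * z - 1) ^ 2 - p := by
      rcases Int.even_or_odd y with ⟨w, hw⟩ | ⟨w, hw⟩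
      · refine ⟨w + (q + 1) / 2, ?_⟩
        have e : 2 * (w + ((q : ℤ) + 1) / 2) - 1 = y + q := by omega
        rw [e, show (y + (q : ℤ)) ^ 2 - p = (y ^ 2 - p) + q * (2 * y + q) by ring]
        exact dvd_add hy (dvd_mul_right _ _)
      · refine ⟨w + 1, ?_⟩
        have e : 2 * (w + 1) - 1 = y := by omega
        rwa [e]
    obtain ⟨z, hz⟩ := this
    refine ⟨z, ?_⟩
    rw [show (2 * z - 1) ^ 2 - (p : ℤ) = 2 ^ 2 * (z ^ 2 - z - m) by rw [hm]; ring] at hz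
    refine IsCoprime.dvd_of_dvd_mul_left ?_ hz
    apply IsCoprime.pow_right
    have := (Nat.coprime_primes hq Nat.prime_two).2 hq2
    exact_mod_cast Nat.isCoprime_iff_coprime.2 this

lemma no_root (p : ℕ) [hpp : Fact (Nat.Prime p)] (hp : p % 4 = 1) (m : ℤ) (hm : (p : ℤ) = 4 * m + 1)
    (q : ℕ) (hq : q.Prime) (h : legendreSym p q = -1) (c : ℤ) : ¬ (q : ℤ) ∣ c ^ 2 - c - m := by
  intro hc
  by_cases hq2 : q = 2
  · subst hq2
    have hs := (legendreSym.eq_neg_one_iff p).1 h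
    push_cast at hs
    rw [ZMod.exists_sq_eq_two_iff (by rintro rfl; norm_num at hp)] at hs
    have h1 : c ^ 2 - c - m = c * (c - 1) - m := by ring
    have h2 : Even (c * (c - 1)) := by
      rcases Int.even_or_odd c with h | h
      · exact h.mul_right _
      · exact (h.sub_odd odd_one).mul_left _
    obtain ⟨w, hw⟩ := h2
    rw [h1, hw] at hc
    omega
  · have : Fact q.Prime := ⟨hq⟩
    rw [← legendreSym.quadratic_reciprocity_one_mod_four hp hq2] at h
    apply (legendreSym.eq_neg_one_iff q).1 h
    refine ⟨((2 * c - 1 : ℤ) : ZMod q), ?_⟩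
    rw [← sub_eq_zero, ← Int.cast_mul, ← Int.cast_sub, ZMod.intCast_zmod_eq_zero_iff_dvd]
    rw [show (p : ℤ) - (2 * c - 1) * (2 * c - 1) = -4 * (c ^ 2 - c - m) by rw [hm]; ring]
    exact hc.mul_left _

lemma C_main (p : ℕ) [hpp : Fact (Nat.Prime p)] (hp : p % 4 = 1) (θ : S) (m : ℤ) (hm : (p : ℤ) = 4 * m + 1)
    (hθ : θ ^ 2 = θ + m) (hb : ∀ z : S, ∃ a b : ℤ, z = a + b * θ)
    (hu : ∀ a b : ℤ, (a : S) + b * θ = 0 → a = 0 ∧ b = 0) (h2 : Module.finrank ℤ S = 2)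
    (q k : ℕ) (hq : q.Prime) :
    (Nat.card {I : Ideal S // absNorm I = q ^ k} : ℤ) = ∑ i ∈ range (k + 1), legendreSym p q ^ i := by
  by_cases h0 : ((q : ℤ) : ZMod p) = 0
  · have hqp : q = p := by
      rw [ZMod.intCast_zmod_eq_zero_iff_dvd, Int.natCast_dvd_natCast] at h0
      exact ((Nat.prime_dvd_prime_iff_eq hpp.out hq).1 h0).symm
    rw [(legendreSym.eq_zero_iff p q).2 h0]
    subst hqp
    rw [C_ram θ m hθ h2 q k hq hm, sum_range_succ']
    simp
  · rcases legendreSym.eq_one_or_neg_one p h0 with h | h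
    · obtain ⟨c, hc⟩ := root_of_one p hp m hm q hq h
      rw [C_split θ m hθ hb hu h2 q k hq c hc, h]
      · simp
      · intro hd
        have : (q : ℤ) ∣ p := by
          rw [show (p : ℤ) = (2 * c - 1) * (2 * c - 1) - 4 * (c ^ 2 - c - m) by rw [hm]; ring]
          exact dvd_sub (hd.mul_left _) (hc.mul_left _)
        rw [Int.natCast_dvd_natCast, Nat.prime_dvd_prime_iff_eq hq hpp.out] at this
        apply h0; rw [this]; simp
    · rw [C_inert θ m hθ h2 q k hq (no_root p hp m hm q hq h), h, neg_one_geom_sum]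
      by_cases hk : Even k
      · simp [hk, Nat.even_add_one]
      · simp [hk, Nat.even_add_one]

end partC

section partE1
open Filter Topology NumberField ArithmeticFunction

lemma ideal_count_eq (p : ℕ) [hpp : Fact (Nat.Prime p)] (hp : p % 4 = 1) (K : Type) [Field K] [NumberField K]
    (θ : 𝓞 K) (m : ℤ) (hm : (p : ℤ) = 4 * m + 1)
    (hθ : θ ^ 2 = θ + m) (hb : ∀ z : 𝓞 K, ∃ a b : ℤ, z = a + b * θ)
    (hu : ∀ a b : ℤ, (a : 𝓞 K) + b * θ = 0 → a = 0 ∧ b = 0) (h2 : Module.finrank ℤ (𝓞 K) = 2) :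
    toArithmeticFunction (fun n => (Nat.card {I : Ideal (𝓞 K) // Ideal.absNorm I = n} : ℂ)) =
      toArithmeticFunction (fun n => (1 : ℂ)) * toArithmeticFunction (fun n => chi p n) := by
  have hz : toArithmeticFunction (fun n => (1 : ℂ)) = ((ArithmeticFunction.zeta : ArithmeticFunction ℕ) : ArithmeticFunction ℂ) := by
    ext n; simp [toArithmeticFunction, natCoe_apply, zeta_apply]
  have h1 : (toArithmeticFunction (fun n => (Nat.card {I : Ideal (𝓞 K) // Ideal.absNorm I = n} : ℂ))).IsMultiplicative := by
    rw [IsMultiplicative.iff_ne_zero]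
    constructor
    · simp [toArithmeticFunction, Ideal.absNorm_eq_one_iff]
    · intro a b ha hb hab
      simp only [toArithmeticFunction, ArithmeticFunction.coe_mk, mul_eq_zero, ha, hb, or_self, if_false]
      rw [card_mul_coprime a b ha hb hab]
      push_cast; rfl
  have h3 : (toArithmeticFunction (fun n => (1 : ℂ)) * toArithmeticFunction (fun n => chi p n)).IsMultiplicative := by
    rw [hz]
    exact (isMultiplicative_zeta.natCast).mul (DirichletCharacter.isMultiplicative_toArithmeticFunction (chi p))
  rw [IsMultiplicative.eq_iff_eq_on_prime_powers _ h1 _ h3]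
  intro q k hq
  rw [hz, coe_zeta_mul_apply, Nat.sum_divisors_prime_pow hq]
  have hq0 : ∀ i, q ^ i ≠ 0 := fun i => pow_ne_zero i hq.ne_zero
  simp only [toArithmeticFunction, ArithmeticFunction.coe_mk, hq0, if_false]
  have := C_main p hp θ m hm hθ hb hu h2 q k hq
  have := congrArg (Int.cast : ℤ → ℂ) this
  push_cast at this
  rw [this]
  apply sum_congr rfl
  intro i _
  rw [Nat.cast_pow, map_pow, chi_apply_nat]

lemma zeta_factor (p : ℕ) [hpp : Fact (Nat.Prime p)] (hp : p % 4 = 1) (K : Type) [Field K] [NumberField K]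
    (θ : 𝓞 K) (m : ℤ) (hm : (p : ℤ) = 4 * m + 1)
    (hθ : θ ^ 2 = θ + m) (hb : ∀ z : 𝓞 K, ∃ a b : ℤ, z = a + b * θ)
    (hu : ∀ a b : ℤ, (a : 𝓞 K) + b * θ = 0 → a = 0 ∧ b = 0) (h2 : Module.finrank ℤ (𝓞 K) = 2)
    (s : ℂ) (hs : 1 < s.re) :
    dedekindZeta K s = riemannZeta s * LSeries (fun n => chi p n) s := by
  rw [← LSeries_one_eq_riemannZeta hs, ← LSeries_convolution']
  · unfold dedekindZeta
    apply LSeries_congr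
    intro n hn
    have := congrArg (fun g : ArithmeticFunction ℂ => g n) (ideal_count_eq p hp K θ m hm hθ hb hu h2)
    unfold LSeries.convolution
    refine Eq.trans ?_ this
    simp [toArithmeticFunction, hn]
  · exact LSeriesSummable_one_iff.2 hs
  · exact DirichletCharacter.LSeriesSummable_of_one_lt_re (chi p) hs

lemma residue_eq (p : ℕ) [hpp : Fact (Nat.Prime p)] (hp : p % 4 = 1) (K : Type) [Field K] [NumberField K]
    (θ : 𝓞 K) (m : ℤ) (hm : (p : ℤ) = 4 * m + 1)
    (hθ : θ ^ 2 = θ + m) (hb : ∀ z : 𝓞 K, ∃ a b : ℤ, z = a + b * θ)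
    (hu : ∀ a b : ℤ, (a : 𝓞 K) + b * θ = 0 → a = 0 ∧ b = 0) (h2 : Module.finrank ℤ (𝓞 K) = 2) :
    (dedekindZeta_residue K : ℂ) = Ip p := by
  refine tendsto_nhds_unique (tendsto_sub_one_mul_dedekindZeta_nhdsGT K) ?_
  have h1 : Tendsto (fun s : ℝ => ((s : ℂ) - 1) * riemannZeta s) (𝓝[>] 1) (𝓝 1) := by
    refine riemannZeta_residue_one.comp (tendsto_nhdsWithin_iff.2 ⟨?_, ?_⟩)
    · have : Continuous (fun s : ℝ => (s : ℂ)) := Complex.continuous_ofReal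
      simpa using (this.tendsto 1).mono_left (nhdsWithin_le_nhds (s := Set.Ioi 1))
    · filter_upwards [self_mem_nhdsWithin] with s hs
      have hs' : (1 : ℝ) < s := hs
      simp only [Set.mem_compl_iff, Set.mem_singleton_iff]
      exact_mod_cast hs'.ne'
  have h4 := h1.mul (B1 p hp)
  rw [one_mul] at h4
  refine h4.congr' ?_
  filter_upwards [self_mem_nhdsWithin] with s hs
  rw [zeta_factor p hp K θ m hm hθ hb hu h2 s (by simpa using hs), mul_assoc]

end partE1

section partD
open NumberField Module

lemma D_theta (p : ℕ) [hpp : Fact (Nat.Prime p)] (hp : p % 4 = 1) (K : Type) [Field K] [NumberField K]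
    (hdeg : Module.finrank ℚ K = 2) (hsq : ∃ x : K, x ^ 2 = (p : K)) (f : K →+* ℝ) :
    ∃ (θ : 𝓞 K) (m : ℤ), (p : ℤ) = 4 * m + 1 ∧ θ ^ 2 = θ + m ∧ (∀ z : 𝓞 K, ∃ a b : ℤ, z = a + b * θ) ∧
      (∀ a b : ℤ, (a : 𝓞 K) + b * θ = 0 → a = 0 ∧ b = 0) := by
  obtain ⟨s, hs⟩ := hsq
  have hfs : f s ^ 2 = p := by rw [← map_pow, hs, map_natCast]
  have hirr : ∀ a b : ℚ, (a : K) + b * s = 0 → a = 0 ∧ b = 0 := by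
    intro a b h
    have hb : b = 0 := by
      by_contra hb
      have h1 : f s = ((-a / b : ℚ) : ℝ) := by
        have := congrArg f h
        rw [map_add, map_mul, map_ratCast, map_ratCast, map_zero] at this
        have hb' : (b : ℝ) ≠ 0 := by exact_mod_cast hb
        push_cast; field_simp; linarith
      have h2 : Irrational (Real.sqrt p) := hpp.out.irrational_sqrt
      rw [← hfs, Real.sqrt_sq_eq_abs, h1] at h2
      exact h2 ⟨|-a / b|, by push_cast; rfl⟩
    subst hb
    simpa using h
  have hli : LinearIndependent ℚ ![(1 : K), s] := by
    rw [LinearIndependent.pair_iff]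
    intro a b h
    apply hirr a b
    rw [← h, Algebra.smul_def, Algebra.smul_def]; simp
  let B := basisOfLinearIndependentOfCardEqFinrank hli (by simp [hdeg])
  have B0 : B 0 = 1 := by simp [B]
  have B1 : B 1 = s := by simp [B]
  have hrep : ∀ z : K, ∃ x y : ℚ, z = x + y * s := by
    intro z
    refine ⟨B.repr z 0, B.repr z 1, ?_⟩
    have := (B.sum_repr z).symm
    rw [Fin.sum_univ_two, B0, B1, Algebra.smul_def, Algebra.smul_def] at this
    simpa using this
  have hrepr : ∀ x y : ℚ, B.repr (x + y * s) = Finsupp.single 0 x + Finsupp.single 1 y := by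
    intro x y
    have : (x : K) + y * s = x • B 0 + y • B 1 := by
      rw [B0, B1, Algebra.smul_def, Algebra.smul_def]; simp
    rw [this, map_add, map_smul, map_smul, B.repr_self, B.repr_self]
    simp
  have hmat : ∀ x y : ℚ, Algebra.leftMulMatrix B ((x : K) + y * s) = !![x, p * y; y, x] := by
    intro x y
    have e : ((x : K) + y * s) * s = ((p * y : ℚ) : K) + x * s := by
      push_cast; linear_combination (y : K) * hs
    ext i j
    rw [Algebra.leftMulMatrix_eq_repr_mul]
    fin_cases j
    · simp only [Fin.zero_eta, B0, mul_one, hrepr]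
      fin_cases i <;> simp
    · simp only [Fin.mk_one, B1, e, hrepr]
      fin_cases i <;> simp
  have htr : ∀ x y : ℚ, Algebra.trace ℚ K ((x : K) + y * s) = 2 * x := by
    intro x y
    rw [Algebra.trace_eq_matrix_trace B, hmat]; simp [Matrix.trace_fin_two]; ring
  have hnm : ∀ x y : ℚ, Algebra.norm ℚ ((x : K) + y * s) = x ^ 2 - p * y ^ 2 := by
    intro x y
    rw [Algebra.norm_eq_matrix_det B, hmat, Matrix.det_fin_two_of]; ring
  obtain ⟨m, hm⟩ : ∃ m : ℤ, (p : ℤ) = 4 * m + 1 := ⟨p / 4, by omega⟩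
  have hmK : (p : K) = 4 * m + 1 := by exact_mod_cast congrArg (Int.cast : ℤ → K) hm
  have hθK : ((1 + s) / 2) ^ 2 = (1 + s) / 2 + (m : K) := by
    rw [hmK] at hs; linear_combination hs / 4
  have hint : IsIntegral ℤ ((1 + s) / 2) := by
    refine ⟨Polynomial.X ^ 2 - Polynomial.X - Polynomial.C m, ?_, ?_⟩
    · monicity!
    · rw [Polynomial.eval₂_sub, Polynomial.eval₂_sub, Polynomial.eval₂_pow, Polynomial.eval₂_X, Polynomial.eval₂_C, hθK]; simp
  let θ : 𝓞 K := ⟨(1 + s) / 2, hint⟩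
  have hθc : (algebraMap (𝓞 K) K θ) = (1 + s) / 2 := rfl
  refine ⟨θ, m, hm, ?_, ?_, ?_⟩
  · apply RingOfIntegers.coe_injective
    rw [map_pow, map_add, map_intCast, hθc, hθK]
  · intro z
    obtain ⟨x, y, hxy⟩ := hrep (algebraMap (𝓞 K) K z)
    have hz : IsIntegral ℤ (algebraMap (𝓞 K) K z) := z.isIntegral_coe
    have h1 := Algebra.isIntegral_trace (L := ℚ) hz
    have h2 := Algebra.isIntegral_norm ℚ hz
    rw [hxy, htr] at h1
    rw [hxy, hnm] at h2
    obtain ⟨A, hA⟩ := IsIntegrallyClosed.isIntegral_iff.1 h1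
    obtain ⟨N, hN⟩ := IsIntegrallyClosed.isIntegral_iff.1 h2
    simp only [algebraMap_int_eq, Int.coe_castRingHom] at hA hN
    have h3 : IsIntegral ℤ (p * (2 * y)) := by
      refine ⟨Polynomial.X ^ 2 - Polynomial.C (p * (A ^ 2 - 4 * N)), ?_, ?_⟩
      · monicity!
      · rw [Polynomial.eval₂_sub, Polynomial.eval₂_pow, Polynomial.eval₂_X, Polynomial.eval₂_C]; push_cast [algebraMap_int_eq, Int.coe_castRingHom]; rw [hA, hN]; ring
    obtain ⟨C, hC⟩ := IsIntegrallyClosed.isIntegral_iff.1 h3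
    simp only [algebraMap_int_eq, Int.coe_castRingHom] at hC
    have hC2 : C ^ 2 = p * (A ^ 2 - 4 * N) := by
      have : (C : ℚ) ^ 2 = p * (A ^ 2 - 4 * N) := by rw [hC, hA, hN]; ring
      exact_mod_cast this
    have hpC : (p : ℤ) ∣ C := (Nat.prime_iff_prime_int.1 hpp.out).dvd_of_dvd_pow (n := 2) (hC2 ▸ dvd_mul_right _ _)
    obtain ⟨w, rfl⟩ := hpC
    have hp0 : (p : ℤ) ≠ 0 := by exact_mod_cast hpp.out.ne_zero
    have hw : (w : ℚ) = 2 * y := by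
      have hp0' : (p : ℚ) ≠ 0 := by exact_mod_cast hpp.out.ne_zero
      push_cast at hC
      exact mul_left_cancel₀ hp0' hC
    have hpw : (p : ℤ) * w ^ 2 = A ^ 2 - 4 * N := by
      apply mul_left_cancel₀ hp0; rw [← hC2]; ring
    have hpar : Even (A - w) := by
      have h4 : (A - w) * (A + w) = 4 * (m * w ^ 2 + N) := by rw [hm] at hpw; linarith
      by_contra hodd
      rw [Int.not_even_iff_odd] at hodd
      have hodd2 : Odd (A + w) := by
        rw [show A + w = (A - w) + 2 * w by ring]; exact hodd.add_even (even_two_mul w)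
      have := hodd.mul hodd2
      rw [h4] at this
      exact (Int.not_odd_iff_even.2 ⟨2 * (m * w ^ 2 + N), by ring⟩) this
    obtain ⟨a, ha⟩ := hpar
    refine ⟨a, w, ?_⟩
    apply RingOfIntegers.coe_injective
    rw [map_add, map_mul, map_intCast, map_intCast, hθc, hxy]
    have e1 : (w : K) = 2 * y := by exact_mod_cast congrArg (Rat.cast : ℚ → K) hw
    have e2 : (A : K) = 2 * x := by exact_mod_cast congrArg (Rat.cast : ℚ → K) hA
    have e3 : (A : K) - w = a + a := by exact_mod_cast congrArg (Int.cast : ℤ → K) ha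
    linear_combination (-1/2 : K) * e2 + (1/2 : K) * e3 - (s / 2) * e1
  · intro a b h
    have := congrArg (algebraMap (𝓞 K) K) h
    rw [map_add, map_mul, map_intCast, map_intCast, hθc, map_zero] at this
    have h5 := hirr (a + b / 2) (b / 2) (by push_cast; linear_combination this)
    have hb : b = 0 := by
      have : (b : ℚ) = 0 := by linarith [h5.2]
      exact_mod_cast this
    subst hb
    have : (a : ℚ) = 0 := by simpa using h5.1
    exact ⟨by exact_mod_cast this, rfl⟩

lemma D_finrank (K : Type) [Field K] [NumberField K]
    (hdeg : Module.finrank ℚ K = 2) : Module.finrank ℤ (𝓞 K) = 2 := by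
  rw [RingOfIntegers.rank, hdeg]

lemma D_discr (K : Type) [Field K] [NumberField K]
    (θ : 𝓞 K) (m : ℤ) 
    (hθ : θ ^ 2 = θ + m) (hb : ∀ z : 𝓞 K, ∃ a b : ℤ, z = a + b * θ)
    (hu : ∀ a b : ℤ, (a : 𝓞 K) + b * θ = 0 → a = 0 ∧ b = 0) : discr K = 4 * m + 1 := by
  have hli : LinearIndependent ℤ ![(1 : 𝓞 K), θ] := by
    rw [LinearIndependent.pair_iff]
    intro a b h
    apply hu a b
    rw [← h, zsmul_eq_mul, zsmul_eq_mul, mul_one]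
  let B : Basis (Fin 2) ℤ (𝓞 K) := Basis.mk hli (by
    intro z _
    obtain ⟨a, b, rfl⟩ := hb z
    rw [Matrix.range_cons, Matrix.range_cons, Matrix.range_empty, Set.union_empty, Set.singleton_union,
      Submodule.mem_span_pair]
    exact ⟨a, b, by rw [zsmul_eq_mul, zsmul_eq_mul, mul_one]⟩)
  have B0 : B 0 = 1 := by simp [B]
  have B1 : B 1 = θ := by simp [B]
  have hrepr : ∀ x y : ℤ, B.repr (x + y * θ) = Finsupp.single 0 x + Finsupp.single 1 y := by
    intro x y
    have : (x : 𝓞 K) + y * θ = x • B 0 + y • B 1 := by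
      rw [B0, B1, zsmul_eq_mul, zsmul_eq_mul, mul_one]
    rw [this, map_add, map_smul, map_smul, B.repr_self, B.repr_self]
    simp
  have hmat : ∀ x y : ℤ, Algebra.leftMulMatrix B ((x : 𝓞 K) + y * θ) = !![x, m * y; y, x + y] := by
    intro x y
    have e : ((x : 𝓞 K) + y * θ) * θ = ((m * y : ℤ) : 𝓞 K) + ((x + y : ℤ) : 𝓞 K) * θ := by
      push_cast; linear_combination (y : 𝓞 K) * hθ
    ext i j
    rw [Algebra.leftMulMatrix_eq_repr_mul]
    fin_cases j
    · simp only [Fin.zero_eta, B0, mul_one, hrepr]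
      fin_cases i <;> simp
    · simp only [Fin.mk_one, B1, e, hrepr]
      fin_cases i <;> simp
  have htr : ∀ x y : ℤ, Algebra.trace ℤ (𝓞 K) ((x : 𝓞 K) + y * θ) = 2 * x + y := by
    intro x y
    rw [Algebra.trace_eq_matrix_trace B, hmat]; simp [Matrix.trace_fin_two]; ring
  have t1 : Algebra.trace ℤ (𝓞 K) 1 = 2 := by simpa using htr 1 0
  have t2 : Algebra.trace ℤ (𝓞 K) θ = 1 := by simpa using htr 0 1
  have t3 : Algebra.trace ℤ (𝓞 K) (θ * θ) = 2 * m + 1 := by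
    have := htr m 1
    rw [← this]; congr 1; push_cast; linear_combination hθ
  rw [← discr_eq_discr K B, Algebra.discr_def, Matrix.det_fin_two]
  simp only [Algebra.traceMatrix_apply, Algebra.traceForm_apply, B0, B1, mul_one, one_mul, t1, t2, t3]
  ring

end partD

section partD3
open NumberField NumberField.Units NumberField.InfinitePlace

noncomputable def FF {K : Type} [Field K] [NumberField K] (f : K →+* ℝ) : (𝓞 K)ˣ →* ℝ :=
  ((f.comp (algebraMap (𝓞 K) K)) : 𝓞 K →* ℝ).comp (Units.coeHom _)

lemma FF_apply {K : Type} [Field K] [NumberField K] (f : K →+* ℝ) (x : (𝓞 K)ˣ) :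
    FF f x = f (algebraMap (𝓞 K) K (x : 𝓞 K)) := rfl

lemma FF_neg {K : Type} [Field K] [NumberField K] (f : K →+* ℝ) (x : (𝓞 K)ˣ) :
    FF f (-x) = - FF f x := by
  simp [FF_apply]

lemma FF_ne {K : Type} [Field K] [NumberField K] (f : K →+* ℝ) (x : (𝓞 K)ˣ) : FF f x ≠ 0 := by
  intro h
  have : FF f (x * x⁻¹) = 0 := by rw [map_mul, h, zero_mul]
  rw [mul_inv_cancel, map_one] at this
  exact one_ne_zero this

lemma FF_inj {K : Type} [Field K] [NumberField K] (f : K →+* ℝ) (x y : (𝓞 K)ˣ) (h : FF f x = FF f y) :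
    x = y := by
  rw [FF_apply, FF_apply] at h
  exact Units.ext (RingOfIntegers.coe_injective (f.injective h))

lemma FF_tors {K : Type} [Field K] [NumberField K] (f : K →+* ℝ) (x : (𝓞 K)ˣ) (hx : x ∈ torsion K) :
    |FF f x| = 1 := by
  rw [torsion, CommGroup.mem_torsion, isOfFinOrder_iff_pow_eq_one] at hx
  obtain ⟨n, hn, h⟩ := hx
  have h1 : (|FF f x|) ^ n = 1 := by rw [← abs_pow, ← map_pow, h, map_one, abs_one]
  exact (pow_eq_one_iff_of_nonneg (abs_nonneg _) hn.ne').1 h1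

lemma D_tors {K : Type} [Field K] [NumberField K] (f : K →+* ℝ) : torsionOrder K = 2 := by
  classical
  let := Fintype.ofFinite (torsion K)
  rw [torsionOrder, Nat.card_eq_fintype_card]
  refine (Finset.card_eq_two.2 ⟨1, ⟨-1, neg_one_mem_torsion⟩,
    by simp [← Subtype.coe_ne_coe], Finset.ext fun x ↦ ⟨fun _ ↦ ?_, fun _ ↦ Finset.mem_univ _⟩⟩)
  rw [Finset.mem_insert, Finset.mem_singleton, ← Subtype.val_inj, ← Subtype.val_inj]
  rcases eq_or_eq_neg_of_abs_eq (FF_tors f x.1 x.2) with h | h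
  · left; apply FF_inj f; rw [h]; simp
  · right; apply FF_inj f; rw [h]; simp [FF_neg]

lemma D_places {K : Type} [Field K] [NumberField K] (hdeg : Module.finrank ℚ K = 2) (f : K →+* ℝ) :
    nrRealPlaces K = 2 ∧ nrComplexPlaces K = 0 ∧ ∃ w : InfinitePlace K, w.IsReal ∧ ∀ x, w x = |f x| := by
  have hφ : ComplexEmbedding.IsReal (Complex.ofRealHom.comp f) := by
    ext x; simp
  have hw : (mk (Complex.ofRealHom.comp f)).IsReal := isReal_mk_iff.2 hφ
  have h1 := card_add_two_mul_card_eq_rank K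
  have h2 : 0 < nrRealPlaces K := by
    classical
    unfold nrRealPlaces; exact Fintype.card_pos_iff.2 ⟨⟨_, hw⟩⟩
  refine ⟨by omega, by omega, _, hw, fun x => ?_⟩
  rw [InfinitePlace.apply]; simp

lemma D_reg {K : Type} [Field K] [NumberField K] (hdeg : Module.finrank ℚ K = 2) (f : K →+* ℝ)
    (ε : (𝓞 K)ˣ) (hε1 : 1 < FF f ε) (hεmin : ∀ u : (𝓞 K)ˣ, 1 < FF f u → FF f ε ≤ FF f u) :
    regulator K = Real.log (FF f ε) := by
  classical
  obtain ⟨r1, r2, w, hw, hwf⟩ := D_places hdeg f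
  have hcard : Fintype.card (InfinitePlace K) = 2 := by
    rw [card_eq_nrRealPlaces_add_nrComplexPlaces, r1, r2]
  have hrank : rank K = 1 := by unfold rank; rw [hcard]
  obtain ⟨w', hw'⟩ := Fintype.exists_ne_of_one_lt_card (by rw [hcard]; norm_num) w
  have hc1 : Fintype.card {v // v ≠ w'} = 1 := by
    rw [Fintype.card_subtype_compl, hcard]; simp
  have hsub : Subsingleton {v // v ≠ w'} := Fintype.card_le_one_iff_subsingleton.1 hc1.le
  let e : {v // v ≠ w'} ≃ Fin (rank K) := Fintype.equivOfCardEq (by rw [hc1, Fintype.card_fin, hrank])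
  have hreg := regulator_eq_det K w' e
  rw [Matrix.det_eq_elem_of_subsingleton _ ⟨w, hw'.symm⟩] at hreg
  set i0 := e ⟨w, hw'.symm⟩ with hi0
  have hmult : mult w = 1 := hw.mult_eq_one
  simp only [Matrix.of_apply, hmult, Nat.cast_one, one_mul, hwf, ← hi0] at hreg
  set u := fundSystem K i0 with hud
  have hreg' : regulator K = |Real.log (FF f u)| := by
    rw [hreg, Real.log_abs]; rfl
  have hpow : ∃ k : ℤ, Real.log (FF f ε) = k * Real.log (FF f u) := by
    obtain ⟨⟨z, g⟩, h, -⟩ := exist_unique_eq_mul_prod K ε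
    have hs2 : Subsingleton (Fin (rank K)) := by rw [hrank]; infer_instance
    simp only at h
    rw [Fintype.prod_subsingleton _ i0, ← hud] at h
    refine ⟨g i0, ?_⟩
    rw [h, map_mul, map_zpow, Real.log_mul (FF_ne f _) (zpow_ne_zero _ (FF_ne f _)), ← Real.log_abs,
      FF_tors f z.1 z.2, Real.log_one, zero_add, Real.log_zpow]
  obtain ⟨k, hk⟩ := hpow
  have hlog : 0 < Real.log (FF f ε) := Real.log_pos hε1
  have hu0 : Real.log (FF f u) ≠ 0 := by
    intro h0; rw [h0, mul_zero] at hk; exact hlog.ne' hk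
  have hk0 : k ≠ 0 := by
    rintro rfl; rw [Int.cast_zero, zero_mul] at hk; exact hlog.ne' hk
  have habs : Real.log (FF f ε) = |(k : ℝ)| * |Real.log (FF f u)| := by
    rw [← abs_mul, ← hk, abs_of_pos hlog]
  have hk1 : (1 : ℝ) ≤ |(k : ℝ)| := by
    exact_mod_cast Int.one_le_abs hk0
  have hge : |Real.log (FF f u)| ≤ Real.log (FF f ε) := by
    rw [habs]; exact le_mul_of_one_le_left (abs_nonneg _) hk1
  have hex : ∃ v : (𝓞 K)ˣ, 1 < FF f v ∧ Real.log (FF f v) = |Real.log (FF f u)| := by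
    have h1 : ∃ v : (𝓞 K)ˣ, Real.log (FF f v) = |Real.log (FF f u)| := by
      rcases le_total 0 (Real.log (FF f u)) with h | h
      · exact ⟨u, (abs_of_nonneg h).symm⟩
      · exact ⟨u⁻¹, by rw [map_inv, Real.log_inv, abs_of_nonpos h]⟩
    obtain ⟨v, hv⟩ := h1
    have h2 : ∃ v : (𝓞 K)ˣ, 0 < FF f v ∧ Real.log (FF f v) = |Real.log (FF f u)| := by
      rcases lt_or_gt_of_ne (FF_ne f v) with h | h
      · exact ⟨-v, by rw [FF_neg]; linarith, by rw [FF_neg, Real.log_neg_eq_log, hv]⟩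
      · exact ⟨v, h, hv⟩
    obtain ⟨v, hv0, hv⟩ := h2
    refine ⟨v, ?_, hv⟩
    rw [← Real.log_pos_iff hv0.le, hv]
    exact abs_pos.2 hu0
  obtain ⟨v, hv1, hv⟩ := hex
  rw [hreg']
  apply le_antisymm hge
  rw [← hv]
  exact Real.log_le_log (by linarith) (hεmin v hv1)

lemma D_residue (p : ℕ) [hpp : Fact (Nat.Prime p)] {K : Type} [Field K] [NumberField K] (hdeg : Module.finrank ℚ K = 2)
    (f : K →+* ℝ) (hd : discr K = p)
    (ε : (𝓞 K)ˣ) (hε1 : 1 < FF f ε) (hεmin : ∀ u : (𝓞 K)ˣ, 1 < FF f u → FF f ε ≤ FF f u) :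
    dedekindZeta_residue K * Real.sqrt p = 2 * classNumber K * Real.log (FF f ε) := by
  obtain ⟨r1, r2, -⟩ := D_places hdeg f
  have hp0 : Real.sqrt p ≠ 0 := Real.sqrt_ne_zero'.2 (by exact_mod_cast hpp.out.pos)
  rw [dedekindZeta_residue_def, r1, r2, D_tors f, D_reg hdeg f ε hε1 hεmin, hd]
  push_cast
  rw [abs_of_nonneg (by positivity)]
  field_simp

end partD3

section partE2
open NumberField

lemma icc_sum (F : ℕ → ℝ) (n : ℕ) : ∑ j ∈ Icc 1 n, F j = ∑ k ∈ range n, F (k + 1) := by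
  have : Icc 1 n = Ico 1 (n + 1) := by ext; simp
  rw [this, sum_Ico_eq_sum_range]
  simp [add_comm]

lemma sum_zmodR (p : ℕ) [hpp : Fact (Nat.Prime p)] (F : ZMod p → ℝ) :
    ∑ x, F x = ∑ j ∈ range p, F j := by
  have := sum_zmod p (fun x => (F x : ℂ))
  exact_mod_cast this

lemma half_sum (p : ℕ) [hpp : Fact (Nat.Prime p)] (hp : p % 4 = 1) (g : ZMod p → ℝ) (g0 : g 0 = 0)
    (ge : ∀ x, g (-x) = g x) : ∑ x, g x = 2 * ∑ j ∈ Icc 1 ((p - 1) / 2), g (j : ZMod p) := by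
  rw [sum_zmodR, icc_sum (fun j => g (j : ZMod p))]
  set n := (p - 1) / 2 with hn
  have hpn : p = n + n + 1 := by omega
  have e : ∑ j ∈ range p, g (j : ZMod p) = ∑ j ∈ range (n + n + 1), g (j : ZMod p) := by rw [← hpn]
  rw [e, sum_range_succ', Finset.sum_range_add, two_mul]
  simp only [Nat.cast_zero, g0, add_zero]
  congr 1
  rw [← sum_range_reflect]
  apply sum_congr rfl
  intro k hk
  rw [mem_range] at hk
  rw [← ge]
  congr 1
  rw [neg_eq_iff_add_eq_zero, ← Nat.cast_add]
  rw [show n + (n - 1 - k) + 1 + (k + 1) = p by omega]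
  simp

noncomputable def ll (p : ℕ) [NeZero p] (x : ZMod p) : ℝ := Real.log ‖1 - ZMod.stdAddChar x‖
noncomputable def cr (p : ℕ) [Fact (Nat.Prime p)] (x : ZMod p) : ℝ := ((quadraticChar (ZMod p) x : ℤ) : ℝ)

lemma ll_zero (p : ℕ) [hpp : Fact (Nat.Prime p)] : ll p 0 = 0 := by simp [ll]

lemma e_norm (p : ℕ) [hpp : Fact (Nat.Prime p)] (x : ZMod p) : ‖(ZMod.stdAddChar x : ℂ)‖ = 1 := by
  simp

lemma ll_neg (p : ℕ) [hpp : Fact (Nat.Prime p)] (x : ZMod p) : ll p (-x) = ll p x := by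
  unfold ll
  congr 1
  have h : (1 : ℂ) - ZMod.stdAddChar (-x) = (starRingEnd ℂ) (1 - ZMod.stdAddChar x) := by
    rw [map_sub, map_one, AddChar.map_neg_eq_conj]
  rw [h, Complex.norm_conj]

lemma cr_neg (p : ℕ) [hpp : Fact (Nat.Prime p)] (hp : p % 4 = 1) (x : ZMod p) : cr p (-x) = cr p x := by
  unfold cr
  have h : quadraticChar (ZMod p) (-1) = 1 := by
    have := chi_neg_one p hp
    simp only [chi, MulChar.ringHomComp_apply] at this
    simpa using this
  rw [← neg_one_mul, map_mul, h, one_mul]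

lemma cr_zero (p : ℕ) [hpp : Fact (Nat.Prime p)] : cr p 0 = 0 := by simp [cr]

lemma cr_nat (p : ℕ) [hpp : Fact (Nat.Prime p)] (j : ℕ) : cr p j = legendreSym p j := by
  simp [cr, legendreSym]

lemma two_ne (p : ℕ) [hpp : Fact (Nat.Prime p)] (hp : p % 4 = 1) : (2 : ZMod p) ≠ 0 := by
  intro h
  have : ((2 : ℕ) : ZMod p) = 0 := by exact_mod_cast h
  rw [ZMod.natCast_eq_zero_iff] at this
  have := Nat.le_of_dvd (by norm_num) this
  have := hpp.out.two_le
  omega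

lemma e_ne (p : ℕ) [hpp : Fact (Nat.Prime p)] (x : ZMod p) (hx : x ≠ 0) : (1 : ℂ) - ZMod.stdAddChar x ≠ 0 := by
  intro h
  apply hx
  apply ZMod.injective_stdAddChar
  rw [AddChar.map_zero_eq_one]
  linear_combination -h

lemma log_plus (p : ℕ) [hpp : Fact (Nat.Prime p)] (hp : p % 4 = 1) (x : ZMod p) (hx : x ≠ 0) :
    ‖(1 : ℂ) + ZMod.stdAddChar x‖ ≠ 0 ∧
    Real.log ‖(1 : ℂ) + ZMod.stdAddChar x‖ = ll p (2 * x) - ll p x := by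
  have h1 := e_ne p x hx
  have h2 := e_ne p (2 * x) (mul_ne_zero (two_ne p hp) hx)
  have h3 : (1 : ℂ) - ZMod.stdAddChar (2 * x) = (1 - ZMod.stdAddChar x) * (1 + ZMod.stdAddChar x) := by
    rw [two_mul, AddChar.map_add_eq_mul]; ring
  have h4 : (1 : ℂ) + ZMod.stdAddChar x ≠ 0 := by
    intro h; rw [h, mul_zero] at h3; exact h2 h3
  refine ⟨norm_ne_zero_iff.2 h4, ?_⟩
  unfold ll
  rw [h3, norm_mul, Real.log_mul (norm_ne_zero_iff.2 h1) (norm_ne_zero_iff.2 h4)]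
  ring

lemma sum_two (p : ℕ) [hpp : Fact (Nat.Prime p)] (hp : p % 4 = 1) (F : ZMod p → ℝ) :
    ∑ x, F (2 * x) = ∑ x, F x :=
  Fintype.sum_equiv (Equiv.mulLeft₀ 2 (two_ne p hp)) _ _ (fun _ => rfl)

lemma cr_two (p : ℕ) [hpp : Fact (Nat.Prime p)] (hp : p % 4 = 1) : cr p 2 ^ 2 = 1 := by
  unfold cr
  have := quadraticChar_sq_one (two_ne p hp)
  exact_mod_cast this

lemma sum_cr_two (p : ℕ) [hpp : Fact (Nat.Prime p)] (hp : p % 4 = 1) :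
    ∑ x, cr p x * ll p (2 * x) = cr p 2 * ∑ x, cr p x * ll p x := by
  rw [← sum_two p hp (fun x => cr p x * ll p x), mul_sum]
  apply sum_congr rfl
  intro x _
  have : cr p (2 * x) = cr p 2 * cr p x := by unfold cr; rw [map_mul]; push_cast; rfl
  simp only [this]
  have := cr_two p hp
  linear_combination (- cr p x * ll p (2 * x)) * this

lemma sum_cr (p : ℕ) [hpp : Fact (Nat.Prime p)] (hp : p % 4 = 1) : ∑ x, cr p x = 0 := by
  have := chi_sum_zero p hp
  rw [← sum_zmod p (fun x => chi p x)] at this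
  have h : (∑ x, (cr p x : ℂ)) = 0 := by
    rw [← this]
    apply sum_congr rfl
    intro x _
    simp [chi, cr, MulChar.ringHomComp_apply]
  exact_mod_cast h

lemma class_sum (p : ℕ) [hpp : Fact (Nat.Prime p)] (hp : p % 4 = 1)
    (K : Type) [Field K] [NumberField K]
    (hdeg : Module.finrank ℚ K = 2)
    (hsq : ∃ x : K, x ^ 2 = (p : K))
    (f : K →+* ℝ) (ε : (𝓞 K)ˣ) (hε1 : 1 < FF f ε) (hεmin : ∀ u : (𝓞 K)ˣ, 1 < FF f u → FF f ε ≤ FF f u) :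
    ∑ x, cr p x * ll p x = - (2 * classNumber K * Real.log (FF f ε)) := by
  obtain ⟨θ, m, hm, hθ, hb, hu⟩ := D_theta p hp K hdeg hsq f
  have hr := residue_eq p hp K θ m hm hθ hb hu (D_finrank K hdeg)
  have hd := D_discr K θ m hθ hb hu
  have h1 := D_residue p hdeg f (by rw [hd, hm]) ε hε1 hεmin
  have h2 := B3 p hp
  rw [← hr, ← Complex.ofReal_mul, h1] at h2
  have h3 := congrArg Complex.re h2
  rw [Complex.ofReal_re, Complex.re_sum] at h3
  rw [h3, sum_zmodR, ← sum_neg_distrib]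
  apply sum_congr rfl
  intro j hj
  have e1 : chi p (j : ZMod p) = ((cr p (j : ZMod p) : ℝ) : ℂ) := by
    simp [chi, cr, MulChar.ringHomComp_apply]
  rw [e1, Complex.re_ofReal_mul, Complex.neg_re, Complex.log_re, ll, stdAddChar_eq,
    ZMod.val_natCast_of_lt (mem_range.1 hj)]
  ring

lemma norm_log (p : ℕ) [hpp : Fact (Nat.Prime p)] (hp : p % 4 = 1) (j : ℕ) (hj : j ∈ Icc 1 ((p - 1) / 2)) :
    (j : ZMod p) ≠ 0 := by
  rw [mem_Icc] at hj
  intro h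
  rw [ZMod.natCast_eq_zero_iff] at h
  have := Nat.le_of_dvd (by omega) h
  omega

lemma cr_cases (p : ℕ) [hpp : Fact (Nat.Prime p)] (x : ZMod p) (hx : x ≠ 0) : cr p x = 1 ∨ cr p x = -1 := by
  unfold cr
  rcases quadraticChar_dichotomy hx with h | h <;> simp [h]

lemma norm_identity_log (p : ℕ) [hpp : Fact (Nat.Prime p)] (hp : p % 4 = 1) :
    ∑ j ∈ Icc 1 ((p - 1) / 2), 2 * Real.log ‖(1 : ℂ) + (cr p (j : ZMod p) : ℂ) * ZMod.stdAddChar (j : ZMod p)‖ =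
    (cr p 2 - 2) * ((∑ x, cr p x * ll p x) / 2) + ∑ j ∈ Icc 1 ((p - 1) / 2), ll p (j : ZMod p) := by
  have h1 : ∀ j ∈ Icc 1 ((p - 1) / 2),
      2 * Real.log ‖(1 : ℂ) + (cr p (j : ZMod p) : ℂ) * ZMod.stdAddChar (j : ZMod p)‖ =
      (fun x : ZMod p => ll p (2 * x) + cr p x * ll p (2 * x) - 2 * (cr p x * ll p x)) (j : ZMod p) := by
    intro j hj
    have h0 := norm_log p hp j hj
    rcases cr_cases p _ h0 with h | h
    · simp only [h]
      rw [Complex.ofReal_one, one_mul, (log_plus p hp _ h0).2]; ring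
    · simp only [h]
      rw [Complex.ofReal_neg, Complex.ofReal_one, neg_one_mul, ← sub_eq_add_neg]
      unfold ll; ring
  have h2 := half_sum p hp (fun x : ZMod p => ll p (2 * x) + cr p x * ll p (2 * x) - 2 * (cr p x * ll p x))
    (by simp [ll_zero]) (by intro x; simp only [mul_neg, ll_neg, cr_neg p hp])
  have h3 := half_sum p hp (ll p) (ll_zero p) (ll_neg p)
  rw [sum_congr rfl h1]
  rw [sum_sub_distrib, sum_add_distrib, sum_two p hp (ll p), sum_cr_two p hp, ← mul_sum] at h2
  linarith

lemma norm_identity (p : ℕ) [hpp : Fact (Nat.Prime p)] (hp : p % 4 = 1)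
    (E : ℝ) (hE : 0 < E) (h : ℕ) (hs : ∑ x, cr p x * ll p x = - (2 * h * Real.log E)) :
    ∏ j ∈ Icc 1 ((p - 1) / 2), ‖(1 : ℂ) + (cr p (j : ZMod p) : ℂ) * ZMod.stdAddChar (j : ZMod p)‖ ^ 2 =
    E ^ ((2 - legendreSym p 2) * (h : ℤ)) *
      ∏ j ∈ Icc 1 ((p - 1) / 2), ‖(1 : ℂ) - ZMod.stdAddChar (j : ZMod p)‖ := by
  have hl : cr p 2 = legendreSym p 2 := by
    have := cr_nat p 2
    exact_mod_cast this
  have n1 : ∀ j ∈ Icc 1 ((p - 1) / 2),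
      ‖(1 : ℂ) + (cr p (j : ZMod p) : ℂ) * ZMod.stdAddChar (j : ZMod p)‖ ≠ 0 := by
    intro j hj
    have h0 := norm_log p hp j hj
    rcases cr_cases p _ h0 with h | h
    · rw [h, Complex.ofReal_one, one_mul]; exact (log_plus p hp _ h0).1
    · rw [h, Complex.ofReal_neg, Complex.ofReal_one, neg_one_mul, ← sub_eq_add_neg]
      exact norm_ne_zero_iff.2 (e_ne p _ h0)
  have n2 : ∀ j ∈ Icc 1 ((p - 1) / 2), ‖(1 : ℂ) - ZMod.stdAddChar (j : ZMod p)‖ ≠ 0 :=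
    fun j hj => norm_ne_zero_iff.2 (e_ne p _ (norm_log p hp j hj))
  have p1 : 0 < ∏ j ∈ Icc 1 ((p - 1) / 2), ‖(1 : ℂ) + (cr p (j : ZMod p) : ℂ) * ZMod.stdAddChar (j : ZMod p)‖ ^ 2 :=
    prod_pos fun j hj => pow_pos (lt_of_le_of_ne (norm_nonneg _) (n1 j hj).symm) 2
  have p2 : 0 < ∏ j ∈ Icc 1 ((p - 1) / 2), ‖(1 : ℂ) - ZMod.stdAddChar (j : ZMod p)‖ :=
    prod_pos fun j hj => lt_of_le_of_ne (norm_nonneg _) (n2 j hj).symm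
  have p3 : 0 < E ^ ((2 - legendreSym p 2) * (h : ℤ)) := zpow_pos hE _
  apply Real.log_injOn_pos p1 (mul_pos p3 p2)
  rw [Real.log_mul p3.ne' p2.ne', Real.log_zpow, Real.log_prod (fun j hj => pow_ne_zero 2 (n1 j hj)),
    Real.log_prod n2]
  simp only [Real.log_pow]
  have := norm_identity_log p hp
  rw [hs, hl] at this
  push_cast
  unfold ll at this
  linarith

lemma sq_phase (a : ℝ) (ha : a = 1 ∨ a = -1) (z : ℂ) (hz : ‖z‖ = 1) :
    (1 + (a : ℂ) * z) ^ 2 = a * z * ((‖1 + (a : ℂ) * z‖ ^ 2 : ℝ) : ℂ) := by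
  have h1 : z * (starRingEnd ℂ) z = 1 := by rw [Complex.mul_conj']; simp [hz]
  have h2 : (a : ℂ) ^ 2 = 1 := by rcases ha with h | h <;> simp [h]
  rw [Complex.ofReal_pow, ← Complex.mul_conj', map_add, map_one, map_mul, Complex.conj_ofReal]
  linear_combination (-(1 + a * z)) * h2 - (1 + a * z) * (a : ℂ)^2 * h1

lemma prod_sign (p : ℕ) [hpp : Fact (Nat.Prime p)] (hp : p % 4 = 1) :
    ∏ j ∈ Icc 1 ((p - 1) / 2), (cr p (j : ZMod p) : ℂ) = ∏ j ∈ Icc 1 ((p - 1) / 2), Complex.I := by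
  have h1 := half_sum p hp (cr p) (cr_zero p) (cr_neg p hp)
  rw [sum_cr p hp] at h1
  have h2 : ∑ j ∈ Icc 1 ((p - 1) / 2), quadraticChar (ZMod p) (j : ZMod p) = 0 := by
    have : ((∑ j ∈ Icc 1 ((p - 1) / 2), quadraticChar (ZMod p) (j : ZMod p) : ℤ) : ℝ) = 0 := by
      push_cast; unfold cr at h1; linarith
    exact_mod_cast this
  have h3 : ∀ (s : Finset ℕ) (F : ℕ → ℤ), ∏ j ∈ s, Complex.I ^ (F j) = Complex.I ^ (∑ j ∈ s, F j) := by
    intro s F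
    induction s using Finset.induction_on with
    | empty => simp
    | insert a s ha ih => rw [prod_insert ha, sum_insert ha, zpow_add₀ Complex.I_ne_zero, ih]
  have h4 : ∀ j ∈ Icc 1 ((p - 1) / 2), (cr p (j : ZMod p) : ℂ) =
      Complex.I * Complex.I ^ (- quadraticChar (ZMod p) (j : ZMod p)) := by
    intro j hj
    have h0 := norm_log p hp j hj
    unfold cr
    rcases quadraticChar_dichotomy h0 with h | h
    · rw [h]; simp
    · rw [h]; simp
  rw [prod_congr rfl h4, prod_mul_distrib, h3, sum_neg_distrib, h2]
  simp

lemma eta_term (p : ℕ) [hpp : Fact (Nat.Prime p)] (hp : p % 4 = 1) (j : ℕ) (hj : j ∈ Icc 1 ((p - 1) / 2)) :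
    Complex.exp (Real.pi * Complex.I / p) ^ (j : ℤ) - Complex.exp (Real.pi * Complex.I / p) ^ (-(j : ℤ)) =
    Complex.I * (‖(1 : ℂ) - zt p ^ j‖ : ℂ) := by
  rw [mem_Icc] at hj
  have hp0 : (0 : ℝ) < p := by exact_mod_cast hpp.out.pos
  set η := Complex.exp (Real.pi * Complex.I / p) with hη
  have hη0 : η ≠ 0 := Complex.exp_ne_zero _
  have hzt : zt p = η ^ 2 := by
    rw [zt, hη, ← Complex.exp_nat_mul]; congr 1; push_cast; ring
  set t : ℝ := Real.pi * j / p with ht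
  have e1 : η ^ j = Complex.exp (t * Complex.I) := by
    rw [hη, ← Complex.exp_nat_mul]; congr 1; rw [ht]; push_cast; ring
  have e2 : η ^ (j : ℤ) - η ^ (-(j : ℤ)) = Complex.I * ((2 * Real.sin t : ℝ) : ℂ) := by
    rw [zpow_neg, zpow_natCast, e1, ← Complex.exp_neg, ← neg_mul, Complex.exp_mul_I, Complex.exp_mul_I,
      Complex.cos_neg, Complex.sin_neg]
    push_cast; ring
  have hs : 0 < Real.sin t := by
    have hj1 : (1 : ℝ) ≤ j := by exact_mod_cast hj.1
    have hj2 : (j : ℝ) < p := by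
      have : j < p := by omega
      exact_mod_cast this
    apply Real.sin_pos_of_pos_of_lt_pi
    · rw [ht]; have := Real.pi_pos; positivity
    · rw [ht, div_lt_iff₀ hp0]; exact mul_lt_mul_of_pos_left hj2 Real.pi_pos
  have e3 : (1 : ℂ) - zt p ^ j = - (η ^ j * (η ^ (j : ℤ) - η ^ (-(j : ℤ)))) := by
    rw [hzt, zpow_neg, zpow_natCast, mul_sub, mul_inv_cancel₀ (pow_ne_zero _ hη0)]; ring
  have e4 : ‖η ^ j‖ = 1 := by rw [e1, Complex.norm_exp_ofReal_mul_I]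
  rw [e3, norm_neg, norm_mul, e4, one_mul, e2, norm_mul, Complex.norm_I, one_mul, Complex.norm_real,
    Real.norm_of_nonneg (by linarith)]

lemma final_id (p : ℕ) [hpp : Fact (Nat.Prime p)] (hp : p % 4 = 1)
    (E : ℝ) (hE : 0 < E) (h : ℕ) (hs : ∑ x, cr p x * ll p x = - (2 * h * Real.log E)) :
    ∏ j ∈ Icc 1 ((p - 1) / 2), (1 + (legendreSym p (j : ℤ) : ℂ) * zt p ^ j) ^ 2 =
      zt p ^ (((p - 1) / 2) * ((p - 1) / 2 + 1) / 2) * ((E : ℂ) ^ ((2 - legendreSym p 2) * (h : ℤ))) *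
        ∏ j ∈ Icc 1 ((p - 1) / 2),
          (Complex.exp (Real.pi * Complex.I / p) ^ (j : ℤ) - Complex.exp (Real.pi * Complex.I / p) ^ (-(j : ℤ))) := by
  have hz : ∀ j ∈ Icc 1 ((p - 1) / 2), (ZMod.stdAddChar (j : ZMod p) : ℂ) = zt p ^ j := by
    intro j hj
    rw [mem_Icc] at hj
    rw [stdAddChar_eq, ZMod.val_natCast_of_lt (by omega)]
  have h1 : ∀ j ∈ Icc 1 ((p - 1) / 2), (1 + (legendreSym p (j : ℤ) : ℂ) * zt p ^ j) ^ 2 =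
      (cr p (j : ZMod p) : ℂ) * zt p ^ j *
       ((‖(1 : ℂ) + (cr p (j : ZMod p) : ℂ) * ZMod.stdAddChar (j : ZMod p)‖ ^ 2 : ℝ) : ℂ) := by
    intro j hj
    have := sq_phase (cr p (j : ZMod p)) (cr_cases p _ (norm_log p hp j hj)) (ZMod.stdAddChar (j : ZMod p))
      (e_norm p _)
    rw [← hz j hj, ← this, cr_nat]
    push_cast; rfl
  rw [prod_congr rfl h1, prod_mul_distrib, prod_mul_distrib, prod_sign p hp, prod_pow_eq_pow_sum,
    ← Complex.ofReal_prod, norm_identity p hp E hE h hs, prod_congr rfl (eta_term p hp), prod_mul_distrib]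
  have h2 : ∑ j ∈ Icc 1 ((p - 1) / 2), j = ((p - 1) / 2) * ((p - 1) / 2 + 1) / 2 := by
    have := Finset.sum_range_id ((p - 1) / 2 + 1)
    rw [Nat.add_sub_cancel, mul_comm, sum_range_succ'] at this
    have e : Icc 1 ((p - 1) / 2) = Ico 1 ((p - 1) / 2 + 1) := by ext; simp
    rw [e, sum_Ico_eq_sum_range, ← this]
    simp [add_comm]
  rw [h2, prod_congr rfl (fun j hj => by rw [hz j hj] :
    ∀ j ∈ Icc 1 ((p - 1) / 2), ‖(1 : ℂ) - ZMod.stdAddChar (j : ZMod p)‖ = ‖(1 : ℂ) - zt p ^ j‖)]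
  push_cast
  ring

end partE2

end helpers

/-- ∏_{j=1}^{n}(1+(j/p)ζ^j)² = ζ^{n(n+1)/2} ε^{(2-(2/p))h} ∏_{j=1}^{n}(ζ^{j/2}-ζ^{-j/2}). -/
theorem prod_one_add_chi_zeta_sq (p : ℕ) [Fact (Nat.Prime p)] (hp : p % 4 = 1)
    (K : Type) [Field K] [NumberField K]
    (hdeg : Module.finrank ℚ K = 2)
    (hsq : ∃ x : K, x ^ 2 = (p : K))
    (f : K →+* ℝ)
    (ε : (NumberField.RingOfIntegers K)ˣ)
    (hε1 : 1 < f (algebraMap (NumberField.RingOfIntegers K) K (ε : NumberField.RingOfIntegers K)))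
    (hεmin : ∀ u : (NumberField.RingOfIntegers K)ˣ,
      1 < f (algebraMap (NumberField.RingOfIntegers K) K (u : NumberField.RingOfIntegers K)) →
      f (algebraMap (NumberField.RingOfIntegers K) K (ε : NumberField.RingOfIntegers K)) ≤
        f (algebraMap (NumberField.RingOfIntegers K) K (u : NumberField.RingOfIntegers K))) :
    ∏ j ∈ Finset.Icc 1 ((p - 1) / 2),
        (1 + (legendreSym p (j : ℤ) : ℂ) *
          Complex.exp (2 * Real.pi * Complex.I / p) ^ j) ^ 2 =
      Complex.exp (2 * Real.pi * Complex.I / p) ^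
          (((p - 1) / 2) * ((p - 1) / 2 + 1) / 2) *
        ((f (algebraMap (NumberField.RingOfIntegers K) K (ε : NumberField.RingOfIntegers K)) : ℂ) ^
          ((2 - legendreSym p 2) * (NumberField.classNumber K : ℤ))) *
        ∏ j ∈ Finset.Icc 1 ((p - 1) / 2),
          (Complex.exp (Real.pi * Complex.I / p) ^ (j : ℤ) -
            Complex.exp (Real.pi * Complex.I / p) ^ (-(j : ℤ))) := by
  exact final_id p hp _ (lt_trans one_pos hε1) (NumberField.classNumber K)
    (class_sum p hp K hdeg hsq f ε hε1 hεmin)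
end

section
/- Let $p\equiv 1 \pmod 4$ be prime and $n=(p-1)/2$. Let $C$ be the $(n+1)\times(n+1)$ matrix with entries $C_{ij} = (\tfrac{j-i}{p})$ for $0\le i,j\le n$, where $(\tfrac{\cdot}{p})$ is the Legendre symbol (with $(\tfrac{0}{p})=0$). Then $\det C$ is a negative even integer. -/
lemma ch_det_rank_one {n : ℕ} (M : Matrix (Fin (n+1)) (Fin (n+1)) ℂ) :
    (Matrix.of fun i j => M i j + 1).det + (Matrix.of fun i j => M i j - 1).det = 2 * M.det := by
  set M' : Matrix (Fin (n+1)) (Fin (n+1)) ℂ := Matrix.of fun i j => M i j - M 0 j with hM'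
  have key : ∀ s : ℂ, (Matrix.of fun i j => M i j + s).det =
      (M'.updateRow 0 (M 0)).det + s * (M'.updateRow 0 (fun _ => 1)).det := by
    intro s
    rw [← Matrix.det_updateRow_smul, ← Matrix.det_updateRow_add]
    refine Matrix.det_eq_of_forall_row_eq_smul_add_const (fun i => if i = 0 then 0 else 1) 0 (by simp) ?_
    intro i j
    by_cases hi : i = 0
    · subst hi; simp
    · simp [hi, hM']; ring
  have h1 := key 1
  have h2 := key (-1)
  have h0 := key 0
  simp only [add_zero] at h0
  have e : (Matrix.of fun i j => M i j) = M := rfl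
  rw [e] at h0
  simp only [← sub_eq_add_neg] at h2
  rw [h1, h2, h0]; ring

open Polynomial in
lemma ch_cauchy {m : ℕ} (x : Fin m → ℂ) (hx : Function.Injective x)
    (hne : ∀ i j, x i + x j ≠ 0) :
    (Matrix.of fun i j => 2 * x i / (x i + x j)).det
      = (-1) ^ (∑ i : Fin m, (i : ℕ)) * ∏ i, ∏ j ∈ {i}ᶜ, ((x j - x i) / (x j + x i)) := by
  classical
  let Q : Fin m → ℂ[X] := fun j => ∏ k ∈ {j}ᶜ, (X + C (x k))
  have hdeg : ∀ j, (Q j).natDegree < m := by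
    intro j
    have : (Q j).natDegree ≤ ∑ k ∈ ({j}ᶜ : Finset (Fin m)), 1 := by
      refine (natDegree_prod_le _ _).trans (Finset.sum_le_sum fun k _ => ?_)
      simp
    have hm : 0 < m := j.pos
    rw [Finset.sum_const, Finset.card_compl] at this
    simp at this
    omega
  let B : Matrix (Fin m) (Fin m) ℂ := Matrix.of fun k j => (Q j).coeff k
  have hV : ∀ v : Fin m → ℂ, Matrix.vandermonde v * B = Matrix.of fun i j => (Q j).eval (v i) := by
    intro v
    ext i j
    rw [Matrix.mul_apply, Matrix.of_apply, eval_eq_sum_range' (hdeg j), Finset.sum_range]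
    refine Finset.sum_congr rfl fun k _ => ?_
    simp [B, Matrix.vandermonde_apply, mul_comm]
  have hQ : ∀ j y, (Q j).eval y = ∏ k ∈ {j}ᶜ, (y + x k) := by
    intro j y; simp [Q, eval_prod]
  have h1 := congrArg Matrix.det (hV (fun i => - x i))
  have h2 := congrArg Matrix.det (hV x)
  have hdiag : (Matrix.of fun i j => (Q j).eval (- x i)) =
      Matrix.diagonal (fun i => ∏ k ∈ {i}ᶜ, (x k - x i)) := by
    ext i j
    rw [Matrix.of_apply, hQ]
    by_cases hij : i = j
    · subst hij; simp [neg_add_eq_sub]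
    · rw [Matrix.diagonal_apply_ne _ hij]
      exact Finset.prod_eq_zero (i := i) (by simpa using hij) (by simp)
  have hmat : (Matrix.of fun i j => (Q j).eval (x i)) =
      Matrix.of (fun i j => (∏ k ∈ {i}ᶜ, (x k + x i)) * (Matrix.of fun i j => 2 * x i / (x i + x j)) i j) := by
    ext i j
    simp only [Matrix.of_apply]
    rw [hQ]
    have e1 : (x i + x j) * ∏ k ∈ {j}ᶜ, (x i + x k) = ∏ k, (x i + x k) :=
      (Fintype.prod_eq_mul_prod_compl j (fun k => x i + x k)).symm
    have e2 : (x i + x i) * ∏ k ∈ {i}ᶜ, (x i + x k) = ∏ k, (x i + x k) :=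
      (Fintype.prod_eq_mul_prod_compl i (fun k => x i + x k)).symm
    have e3 : ∏ k ∈ {i}ᶜ, (x k + x i) = ∏ k ∈ {i}ᶜ, (x i + x k) :=
      Finset.prod_congr rfl fun k _ => add_comm _ _
    rw [e3]
    have := hne i j
    field_simp
    rw [mul_comm, e1, ← e2]; ring
  have hneg : (Matrix.vandermonde (fun i => - x i)).det =
      (-1) ^ (∑ i : Fin m, (i : ℕ)) * (Matrix.vandermonde x).det := by
    have : Matrix.vandermonde (fun i => - x i) =
        Matrix.of (fun i j : Fin m => (-1) ^ (j : ℕ) * Matrix.vandermonde x i j) := by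
      ext i j
      simp only [Matrix.vandermonde_apply, Matrix.of_apply]
      rw [neg_pow]
    rw [this, Matrix.det_mul_row, Finset.prod_pow_eq_pow_sum]
  rw [Matrix.det_mul, hneg, hdiag, Matrix.det_diagonal] at h1
  rw [Matrix.det_mul, hmat, Matrix.det_mul_column] at h2
  have hVne : (Matrix.vandermonde x).det ≠ 0 := Matrix.det_vandermonde_ne_zero_iff.mpr hx
  have hP : ∏ i, ∏ j ∈ {i}ᶜ, (x j + x i) ≠ 0 :=
    Finset.prod_ne_zero_iff.mpr fun i _ => Finset.prod_ne_zero_iff.mpr fun j _ => hne _ _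
  simp_rw [Finset.prod_div_distrib]
  rw [← h1, mul_div_assoc', eq_div_iff hP, mul_comm, ← h2]
  have : ((-1 : ℂ) ^ (∑ i : Fin m, (i : ℕ))) * ((-1 : ℂ) ^ (∑ i : Fin m, (i : ℕ))) = 1 := by
    rw [← mul_pow]; simp
  rw [← mul_assoc, ← mul_assoc, this, one_mul]

/-- the key determinant identity -/
lemma ch_X {p n : ℕ} [Fact p.Prime] (hn : p = 2 * n + 1) (ψ : AddChar (ZMod p) ℂ)
    (hψ : ∀ a ≠ 0, ψ a ≠ 1) (t : Fin (n+1) → ZMod p) (ht : Function.Injective t) :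
    (Matrix.of fun i j : Fin (n+1) => 2 * ∑ k, ψ (t k * ((i : ZMod p) - (j : ZMod p)))
        - if i = j then (p : ℂ) else 0).det =
      (-1) ^ (∑ i : Fin (n+1), (i : ℕ)) *
      ((∏ i, ∏ j ∈ {i}ᶜ, ‖1 - ψ ((t j - t i) / 2)‖ / ‖1 + ψ ((t j - t i) / 2)‖ : ℝ) : ℂ) := by
  classical
  have hp2 : (2 : ZMod p) ≠ 0 := by
    intro h
    have : ((2:ℕ) : ZMod p) = 0 := by exact_mod_cast h
    rw [ZMod.natCast_eq_zero_iff] at this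
    have h1 := Nat.le_of_dvd (by norm_num) this
    have := (Fact.out : p.Prime).two_le
    omega
  have hpC : (p : ℂ) ≠ 0 := by exact_mod_cast (Fact.out : p.Prime).ne_zero
  have hsq : ∀ d, ψ (d / 2) ^ 2 = ψ d := by
    intro d
    rw [← AddChar.map_nsmul_eq_pow]; congr 1; simp; field_simp
  have hhalf : ∀ d, ψ d ^ (n+1) = ψ (d/2) := by
    intro d
    rw [← AddChar.map_nsmul_eq_pow]; congr 1
    rw [eq_div_iff hp2, nsmul_eq_mul]
    have : ((2 * n + 1 : ℕ) : ZMod p) = 0 := by rw [← hn]; simp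
    push_cast at this ⊢
    linear_combination d * this
  have hplus : ∀ d, 1 + ψ d ≠ 0 := by
    intro d h
    have h1 : ψ d = -1 := by linear_combination h
    have h2 : ψ d ^ p = 1 := by
      rw [← AddChar.map_nsmul_eq_pow]; simp
    rw [h1, Odd.neg_one_pow ⟨n, hn⟩] at h2
    norm_num at h2
  let A : Matrix (Fin (n+1)) (Fin (n+1)) ℂ := Matrix.of fun i k => ψ (t k * (i : ZMod p))
  let A' : Matrix (Fin (n+1)) (Fin (n+1)) ℂ := Matrix.of fun k j => ψ (- (t k * (j : ZMod p)))
  let c : ℂ := -2 / p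
  have hL : (Matrix.of fun i j : Fin (n+1) => 2 * ∑ k, ψ (t k * ((i : ZMod p) - (j : ZMod p)))
        - if i = j then (p : ℂ) else 0) = (-p : ℂ) • (1 + (c • A) * A') := by
    ext i j
    simp only [Matrix.of_apply, Matrix.smul_apply, Matrix.add_apply, Matrix.smul_mul,
      Matrix.mul_apply, smul_eq_mul, A, A', Matrix.one_apply, c]
    have : ∀ k, ψ (t k * ((i : ZMod p) - (j : ZMod p))) =
        ψ (t k * (i : ZMod p)) * ψ (- (t k * (j : ZMod p))) := by
      intro k; rw [← AddChar.map_add_eq_mul]; congr 1; ring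
    simp_rw [this]
    generalize (∑ x, ψ (t x * (i : ZMod p)) * ψ (-(t x * (j : ZMod p)))) = S
    split_ifs <;> field_simp <;> ring
  have hR : (-p : ℂ) • (1 + A' * (c • A)) =
      Matrix.of fun i j => 2 * ψ (t i / 2) / (ψ (t i / 2) + ψ (t j / 2)) := by
    ext i j
    simp only [Matrix.of_apply, Matrix.smul_apply, Matrix.add_apply, Matrix.mul_smul,
      Matrix.mul_apply, smul_eq_mul, A, A', Matrix.one_apply, c]
    have e1 : ∀ k : Fin (n+1), ψ (- (t i * (k : ZMod p))) * ψ (t j * (k : ZMod p)) =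
        ψ (t j - t i) ^ (k : ℕ) := by
      intro k
      rw [← AddChar.map_add_eq_mul, ← AddChar.map_nsmul_eq_pow]; congr 1
      rw [nsmul_eq_mul]; ring
    simp_rw [e1]
    rw [Fin.sum_univ_eq_sum_range (fun k => ψ (t j - t i) ^ k)]
    have e2 : ψ (t j / 2) = ψ (t i / 2) * ψ ((t j - t i) / 2) := by
      rw [← AddChar.map_add_eq_mul]; congr 1; ring
    have hi0 : ψ (t i / 2) ≠ 0 := by
      intro h0
      have := AddChar.norm_apply ψ (t i / 2)
      rw [h0] at this; simp at this
    have e3 : 2 * ψ (t i / 2) / (ψ (t i / 2) + ψ (t j / 2)) = 2 / (1 + ψ ((t j - t i) / 2)) := by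
      rw [e2]
      have := hplus ((t j - t i) / 2)
      rw [show ψ (t i / 2) + ψ (t i / 2) * ψ ((t j - t i) / 2) =
        ψ (t i / 2) * (1 + ψ ((t j - t i) / 2)) by ring]
      field_simp
    rw [e3]
    by_cases hij : i = j
    · subst hij
      simp only [sub_self, AddChar.map_zero_eq_one, one_pow, Finset.sum_const, Finset.card_range,
        zero_div, if_true]
      have : (p : ℂ) = 2 * n + 1 := by rw [hn]; push_cast; ring
      rw [this] at hpC ⊢
      simp
      field_simp
      ring
    · have hd : t j - t i ≠ 0 := sub_ne_zero.mpr fun h => hij (ht h.symm)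
      set d := t j - t i
      have h1 := hplus (d/2)
      have h2 := geom_sum_mul (ψ d) (n+1)
      rw [hhalf] at h2
      have h3 : 1 - ψ (d/2) ≠ 0 := by
        rw [sub_ne_zero]; exact (hψ _ (div_ne_zero hd hp2)).symm
      have h4 := hsq d
      simp only [hij, if_false, zero_add]
      rw [eq_div_iff h1]
      have h5 : (∑ k ∈ Finset.range (n+1), ψ d ^ k) * (1 + ψ (d/2)) = 1 := by
        apply mul_right_cancel₀ h3
        rw [← h4] at h2 ⊢
        linear_combination -h2
      generalize (∑ k ∈ Finset.range (n+1), ψ d ^ k) = S at h5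
      field_simp
      linear_combination h5
  rw [hL, Matrix.det_smul, Matrix.det_one_add_mul_comm, ← Matrix.det_smul, hR]
  have hxinj : Function.Injective (fun i => ψ (t i / 2)) := by
    intro i j hij
    by_contra hne
    have hd : t i - t j ≠ 0 := sub_ne_zero.mpr fun h => hne (ht h)
    refine hψ ((t i - t j) / 2) (div_ne_zero hd hp2) ?_
    have hij' : ψ (t i / 2) = ψ (t j / 2) := hij
    rw [sub_div, AddChar.map_sub_eq_div, hij', div_self]
    intro h0
    have := AddChar.norm_apply ψ (t j / 2)
    rw [h0] at this; simp at this
  have hnz : ∀ d, ψ d ≠ 0 := by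
    intro d h0
    have := AddChar.norm_apply ψ d
    rw [h0] at this; simp at this
  have hxne : ∀ i j, ψ (t i / 2) + ψ (t j / 2) ≠ 0 := by
    intro i j h
    refine hplus ((t j - t i)/2) ?_
    rw [sub_div, AddChar.map_sub_eq_div]
    have := hnz (t i / 2)
    field_simp
    simpa using h
  rw [ch_cauchy (fun i => ψ (t i / 2)) hxinj hxne]
  congr 1
  rw [← Finset.prod_prod_Ioi_mul_eq_prod_prod_off_diag
      (fun j i => (ψ (t j / 2) - ψ (t i / 2)) / (ψ (t j / 2) + ψ (t i / 2))),
    ← Finset.prod_prod_Ioi_mul_eq_prod_prod_off_diag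
      (fun j i => ‖1 - ψ ((t j - t i) / 2)‖ / ‖1 + ψ ((t j - t i) / 2)‖)]
  rw [Complex.ofReal_prod]
  refine Finset.prod_congr rfl fun i _ => ?_
  rw [Complex.ofReal_prod]
  refine Finset.prod_congr rfl fun j _ => ?_
  have hstar : ∀ d, ψ (-d) = (starRingEnd ℂ) (ψ d) := fun d => AddChar.map_neg_eq_conj ψ d
  set d := (t j - t i) / 2 with hd
  have ed : (t i - t j) / 2 = -d := by rw [hd]; ring
  have e1 : (ψ (t j / 2) - ψ (t i / 2)) / (ψ (t j / 2) + ψ (t i / 2)) = (ψ d - 1) / (ψ d + 1) := by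
    have : ψ (t j / 2) = ψ (t i / 2) * ψ d := by
      rw [← AddChar.map_add_eq_mul]; congr 1; rw [hd]; ring
    rw [this, show ψ (t i / 2) * ψ d - ψ (t i / 2) = ψ (t i / 2) * (ψ d - 1) by ring,
      show ψ (t i / 2) * ψ d + ψ (t i / 2) = ψ (t i / 2) * (ψ d + 1) by ring,
      mul_div_mul_left _ _ (hnz _)]
  have e2 : (ψ (t i / 2) - ψ (t j / 2)) / (ψ (t i / 2) + ψ (t j / 2)) =
      (starRingEnd ℂ) ((ψ d - 1) / (ψ d + 1)) := by
    rw [map_div₀ (starRingEnd ℂ), map_sub (starRingEnd ℂ), map_add (starRingEnd ℂ), map_one (starRingEnd ℂ), ← hstar]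
    have : ψ (t i / 2) = ψ (t j / 2) * ψ (-d) := by
      rw [← AddChar.map_add_eq_mul]; congr 1; rw [hd]; ring
    rw [this, show ψ (t j / 2) * ψ (-d) - ψ (t j / 2) = ψ (t j / 2) * (ψ (-d) - 1) by ring,
      show ψ (t j / 2) * ψ (-d) + ψ (t j / 2) = ψ (t j / 2) * (ψ (-d) + 1) by ring,
      mul_div_mul_left _ _ (hnz _)]
  have e3 : ‖1 - ψ (-d)‖ = ‖1 - ψ d‖ := by
    rw [hstar, ← Complex.norm_conj (1 - ψ d)]; simp
  have e4 : ‖1 + ψ (-d)‖ = ‖1 + ψ d‖ := by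
    rw [hstar, ← Complex.norm_conj (1 + ψ d)]; simp
  rw [e1, e2, Complex.mul_conj, ed, e3, e4, Complex.normSq_eq_norm_sq, norm_div,
    norm_sub_rev, add_comm (ψ d)]
  push_cast; ring

open Filter Topology Complex ArithmeticFunction in
open scoped ComplexOrder in
lemma ch_L_nonneg {p : ℕ} [NeZero p] (χ : DirichletCharacter ℂ p) (hχ : χ ^ 2 = 1) (x : ℝ) (hx : 1 < x) :
    0 ≤ χ.LFunction x := by
  have hs : 1 < (x : ℂ).re := by simpa using hx
  have h1 : LSeries χ.zetaMul x = riemannZeta x * χ.LFunction x := by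
    rw [DirichletCharacter.zetaMul, ← ArithmeticFunction.coe_mul, LSeries_convolution']
    · rw [χ.LFunction_eq_LSeries hs]
      congr 1
      · simp_rw [← LSeries_zeta_eq_riemannZeta hs, ← natCoe_apply]
      · exact (LSeries_congr χ.apply_eq_toArithmeticFunction_apply _).symm
    · exact LSeriesSummable_zeta_iff.mpr hs
    · exact (LSeriesSummable_congr _ fun h ↦ (χ.apply_eq_toArithmeticFunction_apply h).symm).mpr <|
        ZMod.LSeriesSummable_of_one_lt_re χ hs
  have h2 : 0 < riemannZeta x := by
    rw [← LSeries_one_eq_riemannZeta hs]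
    apply LSeries.positive
    · intro n; simp
    · simp
    · rw [LSeries.abscissaOfAbsConv_one]; exact_mod_cast hx
  have h3 : 0 ≤ LSeries χ.zetaMul x := by
    unfold LSeries
    refine tsum_nonneg fun n => ?_
    exact LSeries.term_nonneg (DirichletCharacter.zetaMul_nonneg hχ n) x
  rw [h1] at h3
  have : χ.LFunction x = (riemannZeta x)⁻¹ * (riemannZeta x * χ.LFunction x) := by
    rw [inv_mul_cancel_left₀ h2.ne']
  rw [this]
  exact mul_nonneg (inv_nonneg.mpr h2.le) h3

open Filter Topology in
open scoped ComplexOrder in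
lemma ch_L_pos {p : ℕ} [NeZero p] (χ : DirichletCharacter ℂ p) (hχ : χ ^ 2 = 1) (h1 : χ ≠ 1) :
    0 < χ.LFunction 1 := by
  refine lt_of_le_of_ne ?_ (DirichletCharacter.LFunction_apply_one_ne_zero h1).symm
  have hc : Tendsto (fun x : ℝ => χ.LFunction x) (𝓝[>] 1) (𝓝 (χ.LFunction 1)) := by
    have : Continuous (fun x : ℝ => χ.LFunction x) :=
      (DirichletCharacter.differentiable_LFunction h1).continuous.comp Complex.continuous_ofReal
    have h := this.tendsto 1
    simp only [Complex.ofReal_one] at h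
    exact h.mono_left nhdsWithin_le_nhds
  refine ge_of_tendsto hc ?_
  filter_upwards [self_mem_nhdsWithin] with x hx
  exact ch_L_nonneg χ hχ x hx

lemma ch_sum_range_zmod {p : ℕ} [NeZero p] {M : Type*} [AddCommMonoid M] (f : ZMod p → M) :
    ∑ i ∈ Finset.range p, f i = ∑ a, f a := by
  refine Finset.sum_nbij' (fun i => (i : ZMod p)) (fun a => a.val) ?_ ?_ ?_ ?_ ?_
  · simp
  · intro a _; simpa using ZMod.val_lt a
  · intro i hi; exact ZMod.val_cast_of_lt (Finset.mem_range.mp hi)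
  · intro a _; simp
  · simp

lemma ch_char_sum_bound {p : ℕ} [NeZero p] (χ : DirichletCharacter ℂ p) (h1 : χ ≠ 1) (N K : ℕ) :
    ‖∑ i ∈ Finset.range K, χ ((N + i : ℕ) : ZMod p)‖ ≤ p := by
  induction K using Nat.strong_induction_on with
  | _ K ih =>
    by_cases hK : K < p
    · refine (norm_sum_le _ _).trans ?_
      refine (Finset.sum_le_sum (fun i _ => DirichletCharacter.norm_le_one χ _)).trans ?_
      simp; exact hK.le
    · have hp : 0 < p := NeZero.pos p
      obtain ⟨k, rfl⟩ : ∃ k, K = p + k := ⟨K - p, by omega⟩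
      rw [Finset.sum_range_add]
      have : ∑ i ∈ Finset.range p, χ ((N + i : ℕ) : ZMod p) = 0 := by
        have := ch_sum_range_zmod (fun a : ZMod p => χ ((N : ZMod p) + a))
        push_cast
        rw [this, ← MulChar.sum_eq_zero_of_ne_one h1]
        exact Fintype.sum_equiv (Equiv.addLeft (N : ZMod p)) _ _ (fun a => rfl)
      rw [this, zero_add]
      convert ih k (by omega) using 4 with i
      push_cast; simp

lemma ch_abel_bound (a : ℕ → ℝ) (ha : Antitone a) (h0 : ∀ n, 0 ≤ a n) (z : ℕ → ℂ) (b : ℝ)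
    (hz : ∀ K, ‖∑ i ∈ Finset.range K, z i‖ ≤ b) (K : ℕ) :
    ‖∑ i ∈ Finset.range K, a i • z i‖ ≤ b * a 0 := by
  have hb : 0 ≤ b := by simpa using hz 0
  rcases K with _ | K
  · simpa using mul_nonneg hb (h0 0)
  rw [Finset.sum_range_by_parts]
  simp only [Nat.add_sub_cancel]
  refine (norm_sub_le _ _).trans ?_
  have e1 : ‖a K • ∑ i ∈ Finset.range (K+1), z i‖ ≤ a K * b := by
    rw [norm_smul, Real.norm_of_nonneg (h0 K)]
    exact mul_le_mul_of_nonneg_left (hz _) (h0 K)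
  have e2 : ‖∑ i ∈ Finset.range K, (a (i+1) - a i) • ∑ j ∈ Finset.range (i+1), z j‖ ≤ (a 0 - a K) * b := by
    refine (norm_sum_le _ _).trans ?_
    rw [← Finset.sum_range_sub' a, Finset.sum_mul]
    refine Finset.sum_le_sum fun i _ => ?_
    have := ha (Nat.le_succ i)
    rw [norm_smul, Real.norm_of_nonpos (by simpa using this), neg_sub]
    exact mul_le_mul_of_nonneg_left (hz _) (by simpa using this)
  linarith

open Filter Topology in
lemma ch_L_sum {p : ℕ} [NeZero p] (χ : DirichletCharacter ℂ p) (h1 : χ ≠ 1) :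
    Tendsto (fun N => ∑ n ∈ Finset.range N, χ n / n) atTop (𝓝 (χ.LFunction 1)) := by
  have key : ∀ N : ℕ, 1 ≤ N → ∀ x : ℝ, 1 < x →
      ‖χ.LFunction x - ∑ n ∈ Finset.range N, LSeries.term (χ ·) x n‖ ≤ p / N := by
    intro N hN x hx
    have hs : 1 < (x : ℂ).re := by simpa using hx
    have hsum := (ZMod.LSeriesSummable_of_one_lt_re χ hs).hasSum.tendsto_sum_nat
    rw [χ.LFunction_eq_LSeries hs]
    have hN' : (0:ℝ) < N := by exact_mod_cast hN
    refine le_of_tendsto ((hsum.sub_const _).norm) ?_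
    filter_upwards [eventually_ge_atTop N] with M hM
    obtain ⟨K, rfl⟩ := Nat.exists_eq_add_of_le hM
    rw [Finset.sum_range_add, add_sub_cancel_left]
    have h := ch_abel_bound (fun i => ((N + i : ℕ) : ℝ) ^ (-x)) ?_ ?_
      (fun i => χ ((N + i : ℕ) : ZMod p)) p (ch_char_sum_bound χ h1 N) K
    · refine le_trans (le_of_eq ?_) (h.trans ?_)
      · congr 1
        refine Finset.sum_congr rfl fun i _ => ?_
        rw [LSeries.term_of_ne_zero (by omega), Complex.real_smul,
          Complex.ofReal_cpow (by positivity), div_eq_mul_inv, mul_comm]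
        push_cast
        rw [Complex.cpow_neg]
      · simp only [add_zero, div_eq_mul_inv]
        refine mul_le_mul_of_nonneg_left ?_ (by positivity)
        rw [← Real.rpow_neg_one]
        exact Real.rpow_le_rpow_of_exponent_le (by exact_mod_cast hN) (by linarith)
    · intro i j hij
      refine Real.rpow_le_rpow_of_nonpos (by positivity) (by simpa using hij) (by linarith)
    · intro i; positivity
  have key2 : ∀ N : ℕ, 1 ≤ N → ‖χ.LFunction 1 - ∑ n ∈ Finset.range N, χ n / n‖ ≤ p / N := by
    intro N hN
    have hc : Continuous (fun x : ℝ => χ.LFunction x - ∑ n ∈ Finset.range N, LSeries.term (χ ·) x n) := by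
      refine ((DirichletCharacter.differentiable_LFunction h1).continuous.comp
        Complex.continuous_ofReal).sub (continuous_finsetSum _ fun n _ => ?_)
      rcases Nat.eq_zero_or_pos n with rfl | hn
      · simpa using continuous_const
      · simp only [LSeries.term_of_ne_zero hn.ne']
        refine continuous_const.div ?_ ?_
        · exact (Complex.continuous_ofReal).const_cpow (Or.inl (by exact_mod_cast hn.ne'))
        · intro x; simp [Complex.cpow_eq_zero_iff, hn.ne']
    have h := (hc.norm.tendsto 1).mono_left (nhdsWithin_le_nhds (s := Set.Ioi 1))
    have h2 := le_of_tendsto h (by filter_upwards [self_mem_nhdsWithin] with x hx using key N hN x hx)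
    refine le_trans (le_of_eq ?_) h2
    rw [Complex.ofReal_one]
    congr 2
    refine Finset.sum_congr rfl fun n _ => ?_
    rcases Nat.eq_zero_or_pos n with rfl | hn
    · simp
    · simp [LSeries.term_of_ne_zero hn.ne']
  rw [tendsto_iff_norm_sub_tendsto_zero]
  refine squeeze_zero' (Eventually.of_forall fun _ => norm_nonneg _) ?_
    (tendsto_const_div_atTop_nhds_zero_nat (p : ℝ))
  filter_upwards [eventually_ge_atTop 1] with N hN
  rw [norm_sub_rev]; exact key2 N hN

open Filter Topology in
/-- the analytic input -/
lemma ch_analytic {p : ℕ} [Fact p.Prime] (χ : DirichletCharacter ℂ p) (hχ : χ ^ 2 = 1) (h1 : χ ≠ 1)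
    (ψ : AddChar (ZMod p) ℂ) (hψ : ∀ a ≠ 0, ψ a ≠ 1)
    (c : ℝ) (hc : 0 < c) (hg : ∀ n : ℕ, c * χ n = ∑ a, χ a * ψ a ^ n) :
    (∑ a, χ a * (Real.log ‖1 - ψ a‖ : ℂ)).re < 0 := by
  have hpos := ch_L_pos χ hχ h1
  have hsum := ch_L_sum χ h1
  have habel := Complex.tendsto_tsum_powerSeries_nhdsWithin_lt hsum
  have hreal : ∀ a, (χ a).im = 0 := by
    intro a
    rcases MulChar.isQuadratic_iff_sq_eq_one.mpr hχ a with h | h | h <;> simp [h]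
  have hn : ∀ a, ‖ψ a‖ = 1 := fun a => AddChar.norm_apply ψ a
  have hf : ∀ r : ℝ, 0 ≤ r → r < 1 → c * (∑' n : ℕ, χ n / n * (r : ℂ) ^ n).re
      = - ∑ a, (χ a).re * Real.log ‖1 - r * ψ a‖ := by
    intro r hr0 hr1
    have h : ∀ a, HasSum (fun n : ℕ => χ a * ((r * ψ a) ^ n / n)) (χ a * (-Complex.log (1 - r * ψ a))) := by
      intro a
      refine (Complex.hasSum_taylorSeries_neg_log ?_).mul_left _
      rw [norm_mul, hn a, mul_one, Complex.norm_real, Real.norm_of_nonneg hr0]; exact hr1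
    have h' := hasSum_sum (s := Finset.univ) (fun a _ => h a)
    have h'' : HasSum (fun n : ℕ => (c : ℂ) * (χ n / n * (r : ℂ) ^ n)) (∑ a, χ a * (-Complex.log (1 - r * ψ a))) := by
      convert h' using 2 with n
      have := hg n
      calc (c : ℂ) * (χ n / n * (r : ℂ) ^ n) = (c * χ n) * (r ^ n / n) := by ring
        _ = _ := by
          rw [this, Finset.sum_mul]
          refine Finset.sum_congr rfl fun a _ => ?_
          rw [mul_pow]; ring
    have h3 := h''.tsum_eq
    rw [tsum_mul_left] at h3
    have h4 := congrArg Complex.re h3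
    rw [Complex.re_ofReal_mul] at h4
    rw [h4, Complex.re_sum, ← Finset.sum_neg_distrib]
    refine Finset.sum_congr rfl fun a _ => ?_
    rw [Complex.mul_re, hreal a, Complex.neg_re, Complex.log_re]
    ring
  have ht1 : Tendsto (fun r : ℝ => c * (∑' n : ℕ, χ n / n * (r : ℂ) ^ n).re) (𝓝[<] 1) (𝓝 (c * (χ.LFunction 1).re)) := by
    refine Tendsto.const_mul _ ((Complex.continuous_re.tendsto _).comp (habel.comp ?_))
    exact tendsto_map
  have ht2 : Tendsto (fun r : ℝ => - ∑ a, (χ a).re * Real.log ‖1 - r * ψ a‖) (𝓝[<] 1)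
      (𝓝 (- ∑ a, (χ a).re * Real.log ‖1 - ψ a‖)) := by
    refine Tendsto.mono_left ?_ nhdsWithin_le_nhds
    refine (tendsto_finsetSum _ fun a _ => ?_).neg
    by_cases ha : a = 0
    · subst ha
      simp [MulChar.map_zero]
    · refine Tendsto.const_mul _ ?_
      have hne : ‖1 - ψ a‖ ≠ 0 := by
        rw [norm_ne_zero_iff, sub_ne_zero]; exact (hψ a ha).symm
      refine (Real.continuousAt_log hne).tendsto.comp ?_
      have : Continuous (fun r : ℝ => ‖1 - r * ψ a‖) := by fun_prop
      simpa using this.tendsto 1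
  have heq : c * (χ.LFunction 1).re = - ∑ a, (χ a).re * Real.log ‖1 - ψ a‖ := by
    refine tendsto_nhds_unique (ht1.congr' ?_) ht2
    have : ∀ᶠ r : ℝ in 𝓝[<] 1, 0 ≤ r := 
      (lt_mem_nhds (zero_lt_one (α := ℝ))).filter_mono nhdsWithin_le_nhds |>.mono fun _ h => h.le
    filter_upwards [self_mem_nhdsWithin, this] with r hr hr0
    exact hf r hr0 hr
  have : 0 < (χ.LFunction 1).re := (Complex.pos_iff.mp hpos).1
  rw [Complex.re_sum]
  have h5 : ∑ a, (χ a * (Real.log ‖1 - ψ a‖ : ℂ)).re = ∑ a, (χ a).re * Real.log ‖1 - ψ a‖ := by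
    refine Finset.sum_congr rfl fun a _ => ?_
    rw [Complex.re_mul_ofReal]
  rw [h5]
  nlinarith [mul_pos hc this]


lemma ch_even (p n : ℕ) [Fact p.Prime] (hn : p = 2 * n + 1) (h2 : 2 ∣ n) :
    2 ∣ (Matrix.of fun i j : Fin (n + 1) => legendreSym p ((j : ℤ) - (i : ℤ))).det := by
  suffices hs : (((Matrix.of fun i j : Fin (n + 1) => legendreSym p ((j : ℤ) - (i : ℤ))).det : ℤ) : ZMod 2) = 0 from by
    exact_mod_cast (ZMod.intCast_zmod_eq_zero_iff_dvd _ 2).mp hs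
  have h := RingHom.map_det (Int.castRingHom (ZMod 2))
    (Matrix.of fun i j : Fin (n + 1) => legendreSym p ((j : ℤ) - (i : ℤ)))
  rw [eq_intCast] at h
  rw [h, ← Matrix.exists_mulVec_eq_zero_iff]
  refine ⟨fun _ => 1, fun h => by simpa using congrFun h 0, ?_⟩
  funext i
  simp only [Matrix.mulVec, dotProduct, mul_one, Pi.zero_apply]
  have e : ∀ j : Fin (n+1), ((Int.castRingHom (ZMod 2)).mapMatrix
      (Matrix.of fun i j : Fin (n + 1) => legendreSym p ((j : ℤ) - (i : ℤ)))) i j =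
      1 - if j = i then 1 else 0 := by
    intro j
    simp only [RingHom.mapMatrix_apply, Matrix.map_apply, Matrix.of_apply, Int.coe_castRingHom]
    by_cases hij : j = i
    · subst hij; simp
    · have hne : (((j : ℤ) - (i : ℤ) : ℤ) : ZMod p) ≠ 0 := by
        rw [Ne, ZMod.intCast_zmod_eq_zero_iff_dvd]
        intro hd
        have hij' : (j : ℤ) - i ≠ 0 := by
          intro h; apply hij; ext; omega
        have := Int.le_of_dvd (abs_pos.mpr hij') ((dvd_abs _ _).mpr hd)
        have := j.2; have := i.2
        have : |(j : ℤ) - i| ≤ n := by rw [abs_le]; constructor <;> omega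
        omega
      rcases legendreSym.eq_one_or_neg_one p hne with h | h <;> rw [h] <;> simp [hij]
  simp_rw [e]
  obtain ⟨k, rfl⟩ := h2
  simp
  left; rfl

lemma ch_quad_corr {p : ℕ} [Fact p.Prime] (hp2 : p ≠ 2) (d : ZMod p) (hd : d ≠ 0) :
    ∑ a, quadraticChar (ZMod p) a * quadraticChar (ZMod p) (a + d) = -1 := by
  have hr : ringChar (ZMod p) ≠ 2 := by rwa [ZMod.ringChar_zmod_n]
  have h1 : quadraticChar (ZMod p) ≠ 1 := quadraticChar_ne_one hr
  have hj := jacobiSum_nontrivial_inv h1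
  rw [(quadraticChar_isQuadratic (ZMod p)).inv, jacobiSum] at hj
  have : ∑ a, quadraticChar (ZMod p) a * quadraticChar (ZMod p) (a + d) =
      ∑ x, quadraticChar (ZMod p) (-1) * (quadraticChar (ZMod p) x * quadraticChar (ZMod p) (1 - x)) := by
    symm
    refine Fintype.sum_equiv (Equiv.mulLeft₀ (-d) (neg_ne_zero.mpr hd)) _ _ fun x => ?_
    simp only [Equiv.mulLeft₀_apply]
    rw [show -d * x = (-1) * (d * x) by ring, show -1 * (d * x) + d = d * (1 - x) by ring]
    simp only [map_mul]
    have := quadraticChar_sq_one hd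
    linear_combination (-(quadraticChar (ZMod p) (-1)) * (quadraticChar (ZMod p) x) * (quadraticChar (ZMod p) (1-x))) * this
  rw [this, ← Finset.mul_sum, hj]
  have := quadraticChar_sq_one (F := ZMod p) (a := -1) (by simp)
  linear_combination -this

/-- the set of zero and of elements of quadratic character `ε` -/
def chT (p : ℕ) [Fact p.Prime] (ε : ℤ) : Finset (ZMod p) :=
  Finset.univ.filter fun a => a = 0 ∨ quadraticChar (ZMod p) a = ε

lemma ch_ind {p : ℕ} [Fact p.Prime] (ε : ℤ) (hε : ε = 1 ∨ ε = -1) (a : ZMod p) :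
    2 * (if a ∈ chT p ε then (1 : ℤ) else 0) =
      1 + ε * quadraticChar (ZMod p) a + if a = 0 then 1 else 0 := by
  unfold chT
  by_cases ha : a = 0
  · subst ha; simp
  · simp only [Finset.mem_filter, Finset.mem_univ, true_and, ha, false_or, if_false]
    rcases quadraticChar_dichotomy ha with h | h <;> rcases hε with h' | h' <;> rw [h, h'] <;> simp

lemma ch_card {p n : ℕ} [Fact p.Prime] (hn : p = 2 * n + 1) (ε : ℤ) (hε : ε = 1 ∨ ε = -1) :
    (chT p ε).card = n + 1 := by
  have hr : ringChar (ZMod p) ≠ 2 := by rw [ZMod.ringChar_zmod_n]; omega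
  have h : ∑ a : ZMod p, 2 * (if a ∈ chT p ε then (1 : ℤ) else 0) =
      ∑ a, (1 + ε * quadraticChar (ZMod p) a + if a = 0 then 1 else 0) :=
    Finset.sum_congr rfl fun a _ => ch_ind ε hε a
  rw [Finset.sum_add_distrib, Finset.sum_add_distrib, ← Finset.mul_sum, ← Finset.mul_sum,
    quadraticChar_sum_zero hr] at h
  simp [ZMod.card] at h
  omega

lemma ch_count {p : ℕ} [Fact p.Prime] (hp : p % 4 = 1) (ε : ℤ) (hε : ε = 1 ∨ ε = -1)
    (l : ZMod p → ℝ) (h0 : l 0 = 0) :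
    4 * ∑ a ∈ chT p ε, ∑ b ∈ chT p ε, l (b - a) =
      ∑ d, ((p : ℝ) + 1 + 2 * ε * quadraticChar (ZMod p) d) * l d := by
  have hr : ringChar (ZMod p) ≠ 2 := by rw [ZMod.ringChar_zmod_n]; omega
  set I : ZMod p → ℤ := fun a => if a ∈ chT p ε then 1 else 0 with hI
  have hneg : quadraticChar (ZMod p) (-1) = 1 := by
    rw [quadraticChar_neg_one hr, ZMod.card]
    exact ZMod.χ₄_nat_one_mod_four hp
  have e1 : ∑ a ∈ chT p ε, ∑ b ∈ chT p ε, l (b - a) = ∑ d, ((∑ a, I a * I (a + d) : ℤ) : ℝ) * l d := by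
    have : ∀ f : ZMod p → ℝ, ∑ a ∈ chT p ε, f a = ∑ a, (I a : ℝ) * f a := by
      intro f
      simp [hI, Finset.sum_ite_mem]
    rw [this]
    simp_rw [this]
    have : ∀ a, ∑ b, (I b : ℝ) * l (b - a) = ∑ d, (I (a + d) : ℝ) * l d := by
      intro a
      symm
      exact Fintype.sum_equiv (Equiv.addLeft a) _ _ (fun d => by simp)
    simp_rw [this, Finset.mul_sum]
    rw [Finset.sum_comm]
    refine Finset.sum_congr rfl fun d _ => ?_
    push_cast
    rw [Finset.sum_mul]
    exact Finset.sum_congr rfl fun a _ => by ring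
  rw [e1, Finset.mul_sum]
  refine Finset.sum_congr rfl fun d _ => ?_
  by_cases hd : d = 0
  · subst hd; simp [h0]
  rw [← mul_assoc]
  congr 1
  have key : 4 * ∑ a, I a * I (a + d) = (p : ℤ) + 1 + 2 * ε * quadraticChar (ZMod p) d := by
    have hεε : ε * ε = 1 := by rcases hε with h | h <;> rw [h] <;> norm_num
    have hs0 := quadraticChar_sum_zero hr
    have hs1 : ∑ a, quadraticChar (ZMod p) (a + d) = 0 := by
      rw [← hs0]
      exact Fintype.sum_equiv (Equiv.addRight d) _ _ fun a => rfl
    have hs2 := ch_quad_corr (p := p) (by omega) d hd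
    have hsd : quadraticChar (ZMod p) (-d) = quadraticChar (ZMod p) d := by
      rw [← neg_one_mul, map_mul, hneg, one_mul]
    have : ∀ a, 4 * (I a * I (a + d)) = 1 + ε * quadraticChar (ZMod p) a + ε * quadraticChar (ZMod p) (a + d)
        + (quadraticChar (ZMod p) a * quadraticChar (ZMod p) (a + d))
        + (if a = 0 then (1 + ε * quadraticChar (ZMod p) d) else 0)
        + (if a = -d then (1 + ε * quadraticChar (ZMod p) d) else 0) := by
      intro a
      have i1 := ch_ind ε hε a
      have i2 := ch_ind ε hε (a + d)
      have : 4 * (I a * I (a + d)) = (2 * I a) * (2 * I (a + d)) := by ring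
      rw [this]
      simp only [hI]
      rw [i1, i2]
      by_cases ha : a = 0
      · subst ha
        have : (0 : ZMod p) ≠ -d := by simpa [eq_comm] using hd
        simp [hd, this]; ring
      · by_cases ha' : a = -d
        · subst ha'
          simp [hd, hsd]; ring
        · have : a + d ≠ 0 := fun h => ha' (eq_neg_of_add_eq_zero_left h)
          simp only [ha, ha', this, if_false, add_zero]
          linear_combination (quadraticChar (ZMod p) a * quadraticChar (ZMod p) (a + d)) * hεε
    rw [Finset.mul_sum, Finset.sum_congr rfl fun a _ => this a]
    simp only [Finset.sum_add_distrib, ← Finset.mul_sum, hs0, hs1, hs2]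
    simp [ZMod.card]
    ring
  exact_mod_cast key

lemma ch_exists_psi {p : ℕ} [Fact p.Prime] (hp : p % 4 = 1) :
    ∃ ψ : AddChar (ZMod p) ℂ, (∀ a ≠ 0, ψ a ≠ 1) ∧ ψ.IsPrimitive ∧
      ∀ d, ∑ a, (quadraticChar (ZMod p) a : ℂ) * ψ (a * d) = (√p : ℝ) * quadraticChar (ZMod p) d := by
  have hr : ringChar (ZMod p) ≠ 2 := by rw [ZMod.ringChar_zmod_n]; omega
  set χ : MulChar (ZMod p) ℂ := (quadraticChar (ZMod p)).ringHomComp (Int.castRingHom ℂ) with hχ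
  have hχa : ∀ a, χ a = (quadraticChar (ZMod p) a : ℂ) := fun a => rfl
  have hneg : quadraticChar (ZMod p) (-1) = 1 := by
    rw [quadraticChar_neg_one hr, ZMod.card]
    exact ZMod.χ₄_nat_one_mod_four hp
  have hquad : χ.IsQuadratic := (quadraticChar_isQuadratic (ZMod p)).comp _
  obtain ⟨u, hu⟩ := quadraticChar_exists_neg_one hr
  have hu0 : u ≠ 0 := by rintro rfl; simp at hu
  have hχ1 : χ ≠ 1 := by
    intro h
    have := hχa u
    rw [h, hu, MulChar.one_apply hu0.isUnit] at this
    norm_num at this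
  have shift : ∀ (ψ : AddChar (ZMod p) ℂ) (d : ZMod p), ∑ a, χ a * ψ (a * d) = χ d * gaussSum χ ψ := by
    intro ψ d
    by_cases hd : d = 0
    · subst hd
      simp [MulChar.sum_eq_zero_of_ne_one hχ1]
      left; exact MulChar.map_zero χ
    · have h := gaussSum_mulShift_eq χ ψ (Units.mk0 d hd)
      rw [hquad.inv] at h
      rw [Units.val_mk0] at h
      rw [← h, gaussSum]
      refine Finset.sum_congr rfl fun a _ => ?_
      rw [AddChar.mulShift_apply, mul_comm a d]
  have hprim := ZMod.isPrimitive_stdAddChar p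
  set ψ₀ := ZMod.stdAddChar (N := p)
  have hsq := gaussSum_sq hχ1 hquad hprim
  rw [hχa, hneg, ZMod.card] at hsq
  have hsq2 : (gaussSum χ ψ₀) ^ 2 = ((√p : ℝ) : ℂ) ^ 2 := by
    rw [hsq, ← Complex.ofReal_pow, Real.sq_sqrt (by positivity)]; simp
  have suff : ∀ ψ : AddChar (ZMod p) ℂ, gaussSum χ ψ = (√p : ℝ) →
      ∃ ψ : AddChar (ZMod p) ℂ, (∀ a ≠ 0, ψ a ≠ 1) ∧ ψ.IsPrimitive ∧
      ∀ d, ∑ a, (quadraticChar (ZMod p) a : ℂ) * ψ (a * d) = (√p : ℝ) * quadraticChar (ZMod p) d := by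
    intro ψ hg
    have hne : ψ ≠ 1 := by
      rintro rfl
      rw [gaussSum_one_right hχ1] at hg
      have : (√p : ℝ) ≠ 0 := by
        have := (Fact.out : p.Prime).pos
        positivity
      exact this (by exact_mod_cast hg.symm)
    have hpr := AddChar.IsPrimitive.of_ne_one hne
    refine ⟨ψ, ?_, hpr, ?_⟩
    · intro a ha h1
      refine hpr ha ?_
      ext x
      rw [AddChar.mulShift_apply, AddChar.one_apply]
      have : a * x = x.val • a := by simp [mul_comm]
      rw [this, AddChar.map_nsmul_eq_pow, h1, one_pow]
    · intro d
      have := shift ψ d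
      rw [hg] at this
      rw [mul_comm ((√p : ℝ) : ℂ)]
      exact this
  rcases sq_eq_sq_iff_eq_or_eq_neg.mp hsq2 with h | h
  · exact suff ψ₀ h
  · refine suff (ψ₀.mulShift u) ?_
    have h' := shift ψ₀ u
    rw [h, hχa u, hu] at h'
    rw [gaussSum]
    simp only [AddChar.mulShift_apply, mul_comm u]
    rw [h']; push_cast; ring


lemma ch_entry {p : ℕ} [Fact p.Prime] (ψ : AddChar (ZMod p) ℂ) (hprim : ψ.IsPrimitive)
    (hG : ∀ d, ∑ a, (quadraticChar (ZMod p) a : ℂ) * ψ (a * d) = (√p : ℝ) * quadraticChar (ZMod p) d)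
    (ε : ℤ) (hε : ε = 1 ∨ ε = -1) (d : ZMod p) :
    2 * ∑ a ∈ chT p ε, ψ (a * d) - (if d = 0 then (p : ℂ) else 0) =
      ε * ((√p : ℝ) * quadraticChar (ZMod p) d) + 1 := by
  have h1 : 2 * ∑ a ∈ chT p ε, ψ (a * d) =
      ∑ a, ((2 * (if a ∈ chT p ε then (1 : ℤ) else 0) : ℤ) : ℂ) * ψ (a * d) := by
    rw [Finset.mul_sum, ← Finset.sum_filter_add_sum_filter_not Finset.univ (· ∈ chT p ε)]
    rw [Finset.filter_mem_eq_inter, Finset.univ_inter]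
    rw [Finset.sum_eq_zero (s := Finset.univ.filter _), add_zero]
    · refine Finset.sum_congr rfl fun a ha => ?_
      simp [ha]
    · intro a ha
      simp at ha
      simp [ha]
  rw [h1]
  simp_rw [ch_ind ε hε]
  push_cast
  simp_rw [add_mul, Finset.sum_add_distrib, mul_assoc, ← Finset.mul_sum, hG, one_mul]
  rw [AddChar.sum_mulShift d hprim, ZMod.card]
  simp
  split_ifs <;> ring

lemma ch_one_add_ne {p : ℕ} [Fact p.Prime] (hp2 : p ≠ 2) (ψ : AddChar (ZMod p) ℂ)
    (hψ : ∀ a ≠ 0, ψ a ≠ 1) (x : ZMod p) : 1 + ψ x ≠ 0 := by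
  intro h
  have h' : ψ x = -1 := by linear_combination h
  have h2 : ψ (x + x) = 1 := by rw [AddChar.map_add_eq_mul, h']; norm_num
  have hr : ringChar (ZMod p) ≠ 2 := by rwa [ZMod.ringChar_zmod_n]
  have : x + x = 0 := by
    by_contra hc
    exact hψ _ hc h2
  have hx : x = 0 := by
    have h2' := Ring.two_ne_zero hr
    rw [← two_mul] at this
    exact (mul_eq_zero.mp this).resolve_left h2'
  rw [hx] at h'
  simp at h'
  norm_num at h'

lemma ch_detX {p n : ℕ} [Fact p.Prime] (hn : p = 2 * n + 1)
    (ψ : AddChar (ZMod p) ℂ) (hψ : ∀ a ≠ 0, ψ a ≠ 1) (hprim : ψ.IsPrimitive)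
    (hG : ∀ d, ∑ a, (quadraticChar (ZMod p) a : ℂ) * ψ (a * d) = (√p : ℝ) * quadraticChar (ZMod p) d)
    (ε : ℤ) (hε : ε = 1 ∨ ε = -1) :
    ∃ Y : ℝ, 0 < Y ∧ Real.log Y = ∑ a ∈ chT p ε, ∑ b ∈ chT p ε,
        Real.log (‖1 - ψ ((b - a)/2)‖ / ‖1 + ψ ((b - a)/2)‖) ∧
      (Matrix.of fun i j : Fin (n + 1) => ε * ((√p : ℝ) *
        (quadraticChar (ZMod p) ((i : ZMod p) - (j : ZMod p)) : ℂ)) + 1).det =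
        (-1)^(∑ i : Fin (n+1), (i:ℕ)) * (Y : ℂ) := by
  have hp2 : p ≠ 2 := by omega
  have hr : ringChar (ZMod p) ≠ 2 := by rwa [ZMod.ringChar_zmod_n]
  let e := (chT p ε).equivFinOfCardEq (ch_card hn ε hε)
  let t : Fin (n+1) → ZMod p := fun i => (e.symm i : ZMod p)
  have ht : Function.Injective t := Subtype.val_injective.comp e.symm.injective
  have hsum : ∀ {M : Type} [AddCommMonoid M] (f : ZMod p → M), ∑ a ∈ chT p ε, f a = ∑ i, f (t i) := by
    intro M _ f
    rw [← Finset.sum_coe_sort]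
    exact (Equiv.sum_comp e.symm (fun a : chT p ε => f a)).symm
  have hX := ch_X hn ψ hψ t ht
  have hpos : ∀ d : ZMod p, d ≠ 0 → 0 < ‖1 - ψ (d/2)‖ / ‖1 + ψ (d/2)‖ := by
    intro d hd
    refine div_pos (norm_pos_iff.mpr ?_) (norm_pos_iff.mpr (ch_one_add_ne hp2 ψ hψ _))
    rw [sub_ne_zero]
    exact (hψ _ (div_ne_zero hd (Ring.two_ne_zero hr))).symm
  have hne : ∀ i j, j ∈ ({i}ᶜ : Finset (Fin (n+1))) → t j - t i ≠ 0 := by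
    intro i j hj
    rw [sub_ne_zero]
    intro h
    simp at hj
    exact hj (ht h)
  refine ⟨∏ i, ∏ j ∈ {i}ᶜ, ‖1 - ψ ((t j - t i)/2)‖ / ‖1 + ψ ((t j - t i)/2)‖, ?_, ?_, ?_⟩
  · exact Finset.prod_pos fun i _ => Finset.prod_pos fun j hj => hpos _ (hne i j hj)
  · rw [Real.log_prod (fun i _ => (Finset.prod_pos fun j hj => hpos _ (hne i j hj)).ne'), hsum]
    refine Finset.sum_congr rfl fun i _ => ?_
    rw [Real.log_prod (fun j hj => (hpos _ (hne i j hj)).ne'), hsum,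
      ← Finset.sum_compl_add_sum {i}]
    simp
  · rw [← hX]
    congr 1
    ext i j
    simp only [Matrix.of_apply]
    rw [← ch_entry ψ hprim hG ε hε, hsum]
    congr 1
    have : ((i : ℕ) : ZMod p) - ((j : ℕ) : ZMod p) = 0 ↔ i = j := by
      rw [sub_eq_zero, ZMod.natCast_eq_natCast_iff']
      have := i.2; have := j.2
      rw [Nat.mod_eq_of_lt (by omega), Nat.mod_eq_of_lt (by omega), Fin.ext_iff]
    simp only [this]

lemma ch_log_diff {p : ℕ} [Fact p.Prime] (hp : p % 4 = 1)
    (ψ : AddChar (ZMod p) ℂ) (hψ : ∀ a ≠ 0, ψ a ≠ 1) :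
    ∑ d, (quadraticChar (ZMod p) d : ℝ) * Real.log (‖1 - ψ (d/2)‖ / ‖1 + ψ (d/2)‖) =
      (2 * quadraticChar (ZMod p) 2 - 1) * ∑ d, (quadraticChar (ZMod p) d : ℝ) * Real.log ‖1 - ψ d‖ := by
  have hp2 : p ≠ 2 := by rintro rfl; omega
  have hr : ringChar (ZMod p) ≠ 2 := by rwa [ZMod.ringChar_zmod_n]
  have h2 := Ring.two_ne_zero hr
  have e1 : ∀ d, (quadraticChar (ZMod p) d : ℝ) * Real.log (‖1 - ψ (d/2)‖ / ‖1 + ψ (d/2)‖) =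
      2 * ((quadraticChar (ZMod p) d : ℝ) * Real.log ‖1 - ψ (d/2)‖) -
       (quadraticChar (ZMod p) d : ℝ) * Real.log ‖1 - ψ d‖ := by
    intro d
    by_cases hd : d = 0
    · subst hd; simp
    have n1 : ‖1 - ψ (d/2)‖ ≠ 0 := by
      rw [norm_ne_zero_iff, sub_ne_zero]
      exact (hψ _ (div_ne_zero hd h2)).symm
    have n2 : ‖1 + ψ (d/2)‖ ≠ 0 := norm_ne_zero_iff.mpr (ch_one_add_ne hp2 ψ hψ _)
    have : (1 - ψ d) = (1 - ψ (d/2)) * (1 + ψ (d/2)) := by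
      have : ψ d = ψ (d/2) * ψ (d/2) := by
        rw [← AddChar.map_add_eq_mul]
        congr 1
        field_simp
        ring
      rw [this]; ring
    rw [this, norm_mul, Real.log_mul n1 n2, Real.log_div n1 n2]
    ring
  simp_rw [e1]
  rw [Finset.sum_sub_distrib, ← Finset.mul_sum]
  have e2 : ∑ d, (quadraticChar (ZMod p) d : ℝ) * Real.log ‖1 - ψ (d/2)‖ =
      quadraticChar (ZMod p) 2 * ∑ d, (quadraticChar (ZMod p) d : ℝ) * Real.log ‖1 - ψ d‖ := by
    rw [Finset.mul_sum]
    symm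
    refine Fintype.sum_equiv (Equiv.mulLeft₀ 2 h2) _ _ fun x => ?_
    simp only [Equiv.mulLeft₀_apply, map_mul]
    rw [mul_div_cancel_left₀ _ h2]
    push_cast
    ring
  rw [e2]; ring

lemma ch_sign {p n : ℕ} [Fact p.Prime] (hn : p = 2 * n + 1) (hp : p % 4 = 1) :
    (-1 : ℤ)^(∑ i : Fin (n+1), (i:ℕ)) = quadraticChar (ZMod p) 2 := by
  have hp2 : p ≠ 2 := by omega
  have hr : ringChar (ZMod p) ≠ 2 := by rwa [ZMod.ringChar_zmod_n]
  rw [quadraticChar_two hr, ZMod.card, ZMod.χ₈_nat_eq_if_mod_eight,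
    Fin.sum_univ_eq_sum_range (fun i => i), Finset.sum_range_id]
  obtain ⟨k, rfl⟩ : ∃ k, n = 2 * k := ⟨n / 2, by omega⟩
  have : (2 * k + 1) * (2 * k + 1 - 1) / 2 = (2 * k + 1) * k := by
    rw [Nat.add_sub_cancel, show (2 * k + 1) * (2 * k) = (2 * k + 1) * k * 2 by ring]
    simp
  rw [this, pow_mul, Odd.neg_one_pow ⟨k, rfl⟩]
  rw [if_neg (by omega)]
  rcases Nat.even_or_odd k with h | h
  · rw [h.neg_one_pow, if_pos]
    obtain ⟨m, rfl⟩ := h; omega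
  · rw [h.neg_one_pow, if_neg]
    obtain ⟨m, rfl⟩ := h; omega

lemma ch_neg (p n : ℕ) [Fact p.Prime] (hn : p = 2 * n + 1) (hp : p % 4 = 1) :
    (Matrix.of fun i j : Fin (n + 1) => legendreSym p ((j : ℤ) - (i : ℤ))).det < 0 := by
  have hp2 : p ≠ 2 := by omega
  have hr : ringChar (ZMod p) ≠ 2 := by rwa [ZMod.ringChar_zmod_n]
  obtain ⟨ψ, hψ, hprim, hG⟩ := ch_exists_psi (p := p) hp
  obtain ⟨Y₁, hY₁, hl₁, hd₁⟩ := ch_detX hn ψ hψ hprim hG 1 (Or.inl rfl)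
  obtain ⟨Y₂, hY₂, hl₂, hd₂⟩ := ch_detX hn ψ hψ hprim hG (-1) (Or.inr rfl)
  set Λ := ∑ d, (quadraticChar (ZMod p) d : ℝ) * Real.log ‖1 - ψ d‖ with hΛ
  have hsqrt : 0 < √(p : ℝ) := Real.sqrt_pos.mpr (by exact_mod_cast (Fact.out : p.Prime).pos)
  -- analytic input
  have hΛneg : Λ < 0 := by
    set χ : MulChar (ZMod p) ℂ := (quadraticChar (ZMod p)).ringHomComp (Int.castRingHom ℂ) with hχ
    have hχa : ∀ a, χ a = (quadraticChar (ZMod p) a : ℂ) := fun a => rfl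
    obtain ⟨u, hu⟩ := quadraticChar_exists_neg_one hr
    have hu0 : u ≠ 0 := by rintro rfl; simp at hu
    have hχ1 : χ ≠ 1 := by
      intro h
      have := hχa u
      rw [h, hu, MulChar.one_apply hu0.isUnit] at this
      norm_num at this
    have hquad : χ.IsQuadratic := (quadraticChar_isQuadratic (ZMod p)).comp _
    have h := ch_analytic χ hquad.sq_eq_one hχ1 ψ hψ (√p) hsqrt (by
      intro m
      rw [hχa, ← hG]
      refine Finset.sum_congr rfl fun a _ => ?_
      rw [hχa, ← AddChar.map_nsmul_eq_pow]
      congr 2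
      simp [mul_comm])
    have e : (∑ a, χ a * (Real.log ‖1 - ψ a‖ : ℂ)) = (Λ : ℂ) := by
      rw [hΛ]; push_cast
      exact Finset.sum_congr rfl fun a _ => by rw [hχa]
    rw [e] at h
    simpa using h
  have hc₁ := ch_count hp 1 (Or.inl rfl) (fun d => Real.log (‖1 - ψ (d/2)‖ / ‖1 + ψ (d/2)‖)) (by simp)
  have hc₂ := ch_count hp (-1) (Or.inr rfl) (fun d => Real.log (‖1 - ψ (d/2)‖ / ‖1 + ψ (d/2)‖)) (by simp)
  have hdiff := ch_log_diff hp ψ hψ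
  have hlog : Real.log Y₁ - Real.log Y₂ = (2 * quadraticChar (ZMod p) 2 - 1) * Λ := by
    rw [← hl₁] at hc₁
    rw [← hl₂] at hc₂
    rw [← hdiff]
    have : 4 * (Real.log Y₁ - Real.log Y₂) = ∑ d, 4 * ((quadraticChar (ZMod p) d : ℝ) * Real.log (‖1 - ψ (d/2)‖ / ‖1 + ψ (d/2)‖)) := by
      rw [mul_sub, hc₁, hc₂, ← Finset.sum_sub_distrib]
      refine Finset.sum_congr rfl fun d _ => ?_
      push_cast; ring
    rw [← Finset.mul_sum] at this
    linarith
  set s : ℤ := quadraticChar (ZMod p) 2 with hs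
  have hsv : s = 1 ∨ s = -1 := quadraticChar_dichotomy (Ring.two_ne_zero hr)
  have hYs : (s : ℝ) * (Y₁ - Y₂) < 0 := by
    rcases hsv with h | h <;> rw [h] at hlog ⊢
    · have : Real.log Y₁ < Real.log Y₂ := by push_cast at hlog; linarith
      have := (Real.log_lt_log_iff hY₁ hY₂).mp this
      push_cast; linarith
    · have : Real.log Y₂ < Real.log Y₁ := by push_cast at hlog; linarith
      have := (Real.log_lt_log_iff hY₂ hY₁).mp this
      push_cast; linarith
  -- the determinant
  have hsign := ch_sign hn hp
  rw [← hs] at hsign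
  have hsignC : (-1 : ℂ)^(∑ i : Fin (n+1), (i:ℕ)) = (s : ℂ) := by
    rw [← hsign]; push_cast; rfl
  rw [hsignC] at hd₁ hd₂
  set C := Matrix.of fun i j : Fin (n + 1) => legendreSym p ((j : ℤ) - (i : ℤ)) with hC
  let M : Matrix (Fin (n+1)) (Fin (n+1)) ℂ := Matrix.of fun i j => (√p : ℝ) *
        (quadraticChar (ZMod p) ((i : ZMod p) - (j : ZMod p)) : ℂ)
  have hrank := ch_det_rank_one M
  have hM1 : (Matrix.of fun i j => M i j + 1).det = s * Y₁ := by
    rw [← hd₁]; congr 1; ext i j; simp [M]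
  have hM2 : (Matrix.of fun i j => M i j - 1).det = - (s * Y₂) := by
    rw [← hd₂]
    have : (Matrix.of fun i j => M i j - 1) = - (Matrix.of fun i j : Fin (n + 1) => (((-1 : ℤ) : ℂ)) * ((√p : ℝ) *
        (quadraticChar (ZMod p) ((i : ZMod p) - (j : ZMod p)) : ℂ)) + 1) := by
      ext i j; simp [M]; ring
    rw [this, Matrix.det_neg, Fintype.card_fin, Odd.neg_one_pow (by
      rw [Nat.odd_iff]; omega)]
    ring
  have hMC : M = ((√p : ℝ) : ℂ) • ((Int.castRingHom ℂ).mapMatrix C).transpose := by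
    ext i j
    simp [M, hC, legendreSym]
  have hMdet : M.det = ((√p : ℝ) : ℂ) ^ (n+1) * (C.det : ℂ) := by
    rw [hMC, Matrix.det_smul, Matrix.det_transpose, ← RingHom.map_det, Fintype.card_fin, eq_intCast]
  rw [hM1, hM2, hMdet] at hrank
  generalize C.det = D at hrank ⊢
  have hreal : s * (Y₁ - Y₂) = 2 * (√p ^ (n+1) * (D : ℝ)) := by
    have : ((s * (Y₁ - Y₂) : ℝ) : ℂ) = ((2 * (√p ^ (n+1) * (D : ℝ)) : ℝ) : ℂ) := by
      push_cast
      linear_combination hrank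
    exact_mod_cast this
  rw [hreal] at hYs
  have hlt : √p ^ (n+1) * (D : ℝ) < 0 := by linarith
  by_contra hD
  push Not at hD
  have hD' : (0 : ℝ) ≤ D := by exact_mod_cast hD
  have := mul_nonneg (pow_pos hsqrt (n+1)).le hD'
  linarith

/-- Chapman's determinant is negative and even for p ≡ 1 (mod 4). -/
theorem chapman_det_neg_even (p : ℕ) [Fact p.Prime] (hp : p % 4 = 1) :
    (Matrix.of fun i j : Fin ((p - 1) / 2 + 1) =>
        legendreSym p ((j : ℤ) - (i : ℤ))).det < 0 ∧
    2 ∣ (Matrix.of fun i j : Fin ((p - 1) / 2 + 1) =>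
        legendreSym p ((j : ℤ) - (i : ℤ))).det := by
  exact ⟨ch_neg p _ (by omega) hp, ch_even p _ (by omega) (by omega)⟩
end
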